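/- Let n ≥ 7 and let u : ℝⁿ → ℝ be a smooth solution of the triharmonic Lane–Emden equation (−Δ)³u = |u|^{p−1}u that is stable outside some compact set Θ ⊂ ℝⁿ. If 1 < p < (n+6)/(n−6), then u is identically zero. -/

import Mathlib

open MeasureTheory Filter

noncomputable section

/-- The Euclidean Laplacian of `u` at `x`. -/
def laplacian {n : ℕ} (u : EuclideanSpace ℝ (Fin n) → ℝ) (x : EuclideanSpace ℝ (Fin n)) : ℝ :=
  ∑ i : Fin n, iteratedFDeriv ℝ 2 u x ![EuclideanSpace.single i 1, EuclideanSpace.single i 1]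

/-!
Let `η` be a power of a cut-off function at scale `1 / ρ`. Testing the equation with `u * η ^ 2` and
the stability inequality with `u * η` gives two relations between `∫ |u| ^ (p + 1) * η ^ 2` and
`∫ |∇³ u| ^ 2 * η ^ 2`, which for `1 < p` bound both integrals by commutator terms: derivatives of
`u` of order at most two, weighted by powers of `ρ`. Interpolation reduces these to
`ρ ^ 6 * ∫ u ^ 2`, and Young's inequality reduces that to a small multiple of
`∫ |u| ^ (p + 1) * η ^ 2` plus a multiple of `ρ ^ (6 + 12 / (p - 1) - n)`. Subcriticality makes this
exponent positive, so as `ρ → 0` the integrals of `|u| ^ (p + 1)` and of `|∇³ u| ^ 2` are finite and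
equal, and the lower-order terms vanish. Testing the equation with the cut-off of `x · ∇ u` now
gives the Pohozaev identity `n / (p + 1) * ∫ |u| ^ (p + 1) = (n - 6) / 2 * ∫ |∇³ u| ^ 2`, whose two
coefficients differ in the subcritical range, so both integrals are zero.
-/

namespace TriharmonicLaneEmden

open scoped ContDiff Topology

variable {n k l s : ℕ} {f g u v χ ψ : EuclideanSpace ℝ (Fin n) → ℝ}
  {x : EuclideanSpace ℝ (Fin n)} {c ε ρ p : ℝ}

/-! ### Partial derivatives and the Laplacian -/

/-- The partial derivative `∂f/∂xᵢ`. -/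
def pderiv (i : Fin n) (f : EuclideanSpace ℝ (Fin n) → ℝ) (x : EuclideanSpace ℝ (Fin n)) : ℝ :=
  fderiv ℝ f x (EuclideanSpace.single i 1)

lemma contDiff_pderiv (hf : ContDiff ℝ ∞ f) (i : Fin n) : ContDiff ℝ ∞ (pderiv i f) :=
  (hf.fderiv_right (by simp)).clm_apply contDiff_const

lemma continuous_pderiv (hf : ContDiff ℝ 1 f) (i : Fin n) : Continuous (pderiv i f) :=
  (hf.continuous_fderiv one_ne_zero).clm_apply continuous_const

lemma hasCompactSupport_pderiv (hf : HasCompactSupport f) (i : Fin n) :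
    HasCompactSupport (pderiv i f) :=
  hf.fderiv_apply ℝ _

lemma differentiable_of_smooth (hf : ContDiff ℝ ∞ f) : Differentiable ℝ f :=
  hf.differentiable (by simp)

lemma smooth_mul (hf : ContDiff ℝ ∞ f) (hg : ContDiff ℝ ∞ g) : ContDiff ℝ ∞ (f * g) :=
  hf.mul hg

lemma pderiv_add (hf : ContDiff ℝ ∞ f) (hg : ContDiff ℝ ∞ g) (i : Fin n) :
    pderiv i (f + g) = pderiv i f + pderiv i g := by
  funext x
  simp [pderiv, fderiv_add (differentiable_of_smooth hf x) (differentiable_of_smooth hg x)]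

lemma pderiv_mul (hf : ContDiff ℝ ∞ f) (hg : ContDiff ℝ ∞ g) (i : Fin n) :
    pderiv i (f * g) = pderiv i f * g + f * pderiv i g := by
  funext x
  simp only [pderiv, fderiv_mul (differentiable_of_smooth hf x) (differentiable_of_smooth hg x)]
  simp only [add_apply, smul_apply, smul_eq_mul, Pi.add_apply, Pi.mul_apply, pderiv]
  ring

lemma pderiv_smul (c : ℝ) (f : EuclideanSpace ℝ (Fin n) → ℝ) (i : Fin n) :
    pderiv i (c • f) = c • pderiv i f := by
  funext x
  simp [pderiv, fderiv_const_smul_field]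

lemma pderiv_sum {ι : Type*} {S : Finset ι} {F : ι → EuclideanSpace ℝ (Fin n) → ℝ}
    (hF : ∀ j ∈ S, ContDiff ℝ ∞ (F j)) (i : Fin n) :
    pderiv i (∑ j ∈ S, F j) = ∑ j ∈ S, pderiv i (F j) := by
  funext x
  simp [pderiv, fderiv_sum fun j hj => differentiable_of_smooth (hF j hj) x]

lemma pderiv_comp_smul (f : EuclideanSpace ℝ (Fin n) → ℝ) (ρ : ℝ) (i : Fin n) :
    pderiv i (fun x => f (ρ • x)) = ρ • fun x => pderiv i f (ρ • x) := by
  funext x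
  simp [pderiv, fderiv_comp_smul]

lemma pderiv_pderiv (hf : ContDiff ℝ ∞ f) (i j : Fin n) (x : EuclideanSpace ℝ (Fin n)) :
    pderiv j (pderiv i f) x = fderiv ℝ (fderiv ℝ f) x (EuclideanSpace.single j 1)
      (EuclideanSpace.single i 1) := by
  have hd : Differentiable ℝ (fderiv ℝ f) :=
    ContDiff.differentiable (n := ∞) (hf.fderiv_right (by simp)) (by simp)
  change fderiv ℝ (fun y => fderiv ℝ f y (EuclideanSpace.single i 1)) x _ = _
  simp [fderiv_clm_apply (hd x) (differentiableAt_const _)]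

lemma isSymmSndFDerivAt_of_smooth (hf : ContDiff ℝ ∞ f) (x : EuclideanSpace ℝ (Fin n)) :
    IsSymmSndFDerivAt ℝ f x :=
  hf.contDiffAt.isSymmSndFDerivAt <| by
    rw [minSmoothness_of_isRCLikeNormedField]
    exact WithTop.coe_le_coe.2 (OrderTop.le_top 2)

lemma pderiv_comm (hf : ContDiff ℝ ∞ f) (i j : Fin n) :
    pderiv j (pderiv i f) = pderiv i (pderiv j f) := by
  funext x
  rw [pderiv_pderiv hf, pderiv_pderiv hf, isSymmSndFDerivAt_of_smooth hf x]

lemma laplacian_eq_sum_pderiv (hf : ContDiff ℝ ∞ f) :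
    laplacian f = ∑ i, pderiv i (pderiv i f) := by
  funext x
  simp [laplacian, pderiv_pderiv hf, iteratedFDeriv_two_apply]

lemma contDiff_laplacian (hf : ContDiff ℝ ∞ f) : ContDiff ℝ ∞ (laplacian f) := by
  rw [laplacian_eq_sum_pderiv hf]
  simpa only [← Finset.sum_apply] using
    ContDiff.sum fun i _ => contDiff_pderiv (contDiff_pderiv hf i) i

lemma pderiv_laplacian (hf : ContDiff ℝ ∞ f) (i : Fin n) :
    pderiv i (laplacian f) = laplacian (pderiv i f) := by
  rw [laplacian_eq_sum_pderiv hf, laplacian_eq_sum_pderiv (contDiff_pderiv hf i),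
    pderiv_sum fun j _ => contDiff_pderiv (contDiff_pderiv hf j) j]
  refine Finset.sum_congr rfl fun j _ => ?_
  rw [pderiv_comm (contDiff_pderiv hf j) j i, pderiv_comm hf j i]

lemma contDiff_iterate_laplacian (k : ℕ) (hf : ContDiff ℝ ∞ f) :
    ContDiff ℝ ∞ (laplacian^[k] f) :=
  Function.Iterate.rec (ContDiff ℝ ∞) hf (fun _ => contDiff_laplacian) k

lemma pderiv_iterate_laplacian (k : ℕ) (hf : ContDiff ℝ ∞ f) (i : Fin n) :
    pderiv i (laplacian^[k] f) = laplacian^[k] (pderiv i f) := by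
  induction k with
  | zero => rfl
  | succ k ih =>
    rw [Function.iterate_succ_apply', Function.iterate_succ_apply',
      pderiv_laplacian (contDiff_iterate_laplacian k hf), ih]

lemma hasCompactSupport_laplacian (hf : HasCompactSupport f) :
    HasCompactSupport (laplacian f) := by
  refine HasCompactSupport.intro hf fun x hx => ?_
  have h0 : iteratedFDeriv ℝ 2 f x = 0 :=
    Function.notMem_support.1 fun h => hx (support_iteratedFDeriv_subset 2 h)
  simp [laplacian, h0]

lemma integral_pderiv_mul (hf : ContDiff ℝ 1 f) (hg : ContDiff ℝ 1 g) (hc : HasCompactSupport g)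
    (i : Fin n) : ∫ x, pderiv i f x * g x = -∫ x, f x * pderiv i g x := by
  rw [← neg_eq_iff_eq_neg, eq_comm]
  exact integral_mul_fderiv_eq_neg_fderiv_mul_of_integrable
    (((continuous_pderiv hf i).mul hg.continuous).integrable_of_hasCompactSupport hc.mul_left)
    ((hf.continuous.mul (continuous_pderiv hg i)).integrable_of_hasCompactSupport
      (hasCompactSupport_pderiv hc i).mul_left)
    ((hf.continuous.mul hg.continuous).integrable_of_hasCompactSupport hc.mul_left)
    (fun x _ => hf.differentiable one_ne_zero x) (fun x _ => hg.differentiable one_ne_zero x)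

lemma contDiff_one_of_smooth (hf : ContDiff ℝ ∞ f) : ContDiff ℝ 1 f :=
  hf.of_le (by exact_mod_cast le_top)

lemma integral_laplacian_mul (hf : ContDiff ℝ ∞ f) (hg : ContDiff ℝ ∞ g)
    (hc : HasCompactSupport g) :
    ∫ x, laplacian f x * g x = -∑ i, ∫ x, pderiv i f x * pderiv i g x := by
  simp only [laplacian_eq_sum_pderiv hf, Finset.sum_apply, Finset.sum_mul]
  rw [integral_finsetSum, ← Finset.sum_neg_distrib]
  · exact Finset.sum_congr rfl fun i _ => integral_pderiv_mul
      (contDiff_one_of_smooth (contDiff_pderiv hf i)) (contDiff_one_of_smooth hg) hc i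
  · exact fun i _ => ((contDiff_pderiv (contDiff_pderiv hf i) i).continuous.mul
      hg.continuous).integrable_of_hasCompactSupport hc.mul_left

lemma integral_laplacian_mul_comm (hf : ContDiff ℝ ∞ f) (hg : ContDiff ℝ ∞ g)
    (hcf : HasCompactSupport f) (hcg : HasCompactSupport g) :
    ∫ x, laplacian f x * g x = ∫ x, laplacian g x * f x := by
  rw [integral_laplacian_mul hf hg hcg, integral_laplacian_mul hg hf hcf]
  simp only [mul_comm]

/-! ### Pairings of higher derivatives -/

/-- The pairing `∇ᵏf · ∇ᵏg` of all the partial derivatives of order `k`, each ordered multi-index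
being counted separately. -/
def derivInner : ℕ → (EuclideanSpace ℝ (Fin n) → ℝ) → (EuclideanSpace ℝ (Fin n) → ℝ) →
    EuclideanSpace ℝ (Fin n) → ℝ
  | 0, f, g => f * g
  | k + 1, f, g => ∑ i, derivInner k (pderiv i f) (pderiv i g)

/-- The squared size `|∇ᵏf|²` of the derivatives of order `k`. -/
def derivSq (k : ℕ) (f : EuclideanSpace ℝ (Fin n) → ℝ) : EuclideanSpace ℝ (Fin n) → ℝ :=
  derivInner k f f

/-- The size `|∇ᵏf|` of the derivatives of order `k`. -/
def derivNorm (k : ℕ) (f : EuclideanSpace ℝ (Fin n) → ℝ) (x : EuclideanSpace ℝ (Fin n)) : ℝ :=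
  √(derivSq k f x)

lemma derivInner_succ_apply (k : ℕ) (f g : EuclideanSpace ℝ (Fin n) → ℝ)
    (x : EuclideanSpace ℝ (Fin n)) :
    derivInner (k + 1) f g x = ∑ i, derivInner k (pderiv i f) (pderiv i g) x := by
  simp [derivInner]

lemma derivSq_zero_apply (f : EuclideanSpace ℝ (Fin n) → ℝ) (x : EuclideanSpace ℝ (Fin n)) :
    derivSq 0 f x = f x ^ 2 :=
  (sq (f x)).symm

lemma derivSq_succ_apply (k : ℕ) (f : EuclideanSpace ℝ (Fin n) → ℝ)
    (x : EuclideanSpace ℝ (Fin n)) : derivSq (k + 1) f x = ∑ i, derivSq k (pderiv i f) x :=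
  derivInner_succ_apply k f f x

lemma derivSq_one_apply (f : EuclideanSpace ℝ (Fin n) → ℝ) (x : EuclideanSpace ℝ (Fin n)) :
    derivSq 1 f x = ∑ i, pderiv i f x ^ 2 := by
  simp only [derivSq_succ_apply, derivSq_zero_apply]

lemma contDiff_derivInner (k : ℕ) (hf : ContDiff ℝ ∞ f) (hg : ContDiff ℝ ∞ g) :
    ContDiff ℝ ∞ (derivInner k f g) := by
  induction k generalizing f g with
  | zero => exact hf.mul hg
  | succ k ih =>
    have h := ContDiff.sum (s := Finset.univ) fun i _ =>
      ih (contDiff_pderiv hf i) (contDiff_pderiv hg i)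
    simpa only [derivInner, ← Finset.sum_apply] using h

lemma contDiff_derivSq (k : ℕ) (hf : ContDiff ℝ ∞ f) : ContDiff ℝ ∞ (derivSq k f) :=
  contDiff_derivInner k hf hf

lemma derivInner_comm (k : ℕ) (f g : EuclideanSpace ℝ (Fin n) → ℝ) :
    derivInner k f g = derivInner k g f := by
  induction k generalizing f g with
  | zero => exact mul_comm f g
  | succ k ih => exact Finset.sum_congr rfl fun i _ => ih _ _

lemma derivInner_smul_right (k : ℕ) (f g : EuclideanSpace ℝ (Fin n) → ℝ) (c : ℝ) :
    derivInner k f (c • g) = c • derivInner k f g := by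
  induction k generalizing f g with
  | zero => exact mul_smul_comm c f g
  | succ k ih => simp only [derivInner, pderiv_smul, ih, Finset.smul_sum]

lemma derivSq_nonneg (k : ℕ) (f : EuclideanSpace ℝ (Fin n) → ℝ) (x : EuclideanSpace ℝ (Fin n)) :
    0 ≤ derivSq k f x := by
  induction k generalizing f with
  | zero => exact mul_self_nonneg (f x)
  | succ k ih => exact (derivSq_succ_apply k f x).symm ▸ Finset.sum_nonneg fun i _ => ih _

lemma derivNorm_nonneg (k : ℕ) (f : EuclideanSpace ℝ (Fin n) → ℝ)
    (x : EuclideanSpace ℝ (Fin n)) : 0 ≤ derivNorm k f x :=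
  Real.sqrt_nonneg _

lemma derivNorm_sq (k : ℕ) (f : EuclideanSpace ℝ (Fin n) → ℝ) (x : EuclideanSpace ℝ (Fin n)) :
    derivNorm k f x ^ 2 = derivSq k f x :=
  Real.sq_sqrt (derivSq_nonneg k f x)

lemma derivNorm_zero (f : EuclideanSpace ℝ (Fin n) → ℝ) (x : EuclideanSpace ℝ (Fin n)) :
    derivNorm 0 f x = |f x| :=
  Real.sqrt_mul_self_eq_abs (f x)

lemma derivSq_pderiv_le (k : ℕ) (f : EuclideanSpace ℝ (Fin n) → ℝ) (i : Fin n)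
    (x : EuclideanSpace ℝ (Fin n)) : derivSq k (pderiv i f) x ≤ derivSq (k + 1) f x :=
  (Finset.single_le_sum (fun j _ => derivSq_nonneg k (pderiv j f) x) (Finset.mem_univ i)).trans_eq
    (derivSq_succ_apply k f x).symm

lemma derivNorm_pderiv_le (k : ℕ) (f : EuclideanSpace ℝ (Fin n) → ℝ) (i : Fin n)
    (x : EuclideanSpace ℝ (Fin n)) : derivNorm k (pderiv i f) x ≤ derivNorm (k + 1) f x :=
  Real.sqrt_le_sqrt (derivSq_pderiv_le k f i x)

lemma derivInner_eq_zero_of_notMem_tsupport (k : ℕ) (f : EuclideanSpace ℝ (Fin n) → ℝ)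
    (hx : x ∉ tsupport g) : derivInner k f g x = 0 := by
  induction k generalizing f g with
  | zero => simp [derivInner, image_eq_zero_of_notMem_tsupport hx]
  | succ k ih =>
    rw [derivInner_succ_apply]
    exact Finset.sum_eq_zero fun i _ => ih _ fun h => hx (tsupport_fderiv_apply_subset ℝ _ h)

lemma hasCompactSupport_derivInner (k : ℕ) (f : EuclideanSpace ℝ (Fin n) → ℝ)
    (hg : HasCompactSupport g) : HasCompactSupport (derivInner k f g) :=
  HasCompactSupport.intro hg fun _ hx => derivInner_eq_zero_of_notMem_tsupport k f hx

lemma integrable_derivInner (k : ℕ) (hf : ContDiff ℝ ∞ f) (hg : ContDiff ℝ ∞ g)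
    (hc : HasCompactSupport g) : Integrable (derivInner k f g) :=
  (contDiff_derivInner k hf hg).continuous.integrable_of_hasCompactSupport
    (hasCompactSupport_derivInner k f hc)

lemma pderiv_eventuallyEq (h : f =ᶠ[𝓝 x] g) (i : Fin n) : pderiv i f =ᶠ[𝓝 x] pderiv i g := by
  filter_upwards [h.fderiv (𝕜 := ℝ)] with y hy
  simp only [pderiv, hy]

lemma derivSq_congr (k : ℕ) (h : f =ᶠ[𝓝 x] g) : derivSq k f x = derivSq k g x := by
  induction k generalizing f g with
  | zero => simp only [derivSq_zero_apply, h.eq_of_nhds]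
  | succ k ih => simp only [derivSq_succ_apply, fun i => ih (pderiv_eventuallyEq h i)]

lemma derivSq_smul (k : ℕ) (c : ℝ) (f : EuclideanSpace ℝ (Fin n) → ℝ)
    (x : EuclideanSpace ℝ (Fin n)) : derivSq k (c • f) x = c ^ 2 * derivSq k f x := by
  simp only [derivSq, derivInner_smul_right, derivInner_comm k (c • f), Pi.smul_apply, smul_eq_mul]
  ring

lemma derivSq_comp_smul (k : ℕ) (f : EuclideanSpace ℝ (Fin n) → ℝ) (ρ : ℝ)
    (x : EuclideanSpace ℝ (Fin n)) :
    derivSq k (fun x => f (ρ • x)) x = ρ ^ (2 * k) * derivSq k f (ρ • x) := by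
  induction k generalizing f with
  | zero => simp [derivSq_zero_apply]
  | succ k ih =>
    simp only [derivSq_succ_apply, pderiv_comp_smul, derivSq_smul, ih, Finset.mul_sum]
    exact Finset.sum_congr rfl fun i _ => by ring

lemma derivNorm_comp_smul (k : ℕ) (f : EuclideanSpace ℝ (Fin n) → ℝ) (hρ : 0 ≤ ρ)
    (x : EuclideanSpace ℝ (Fin n)) :
    derivNorm k (fun x => f (ρ • x)) x = ρ ^ k * derivNorm k f (ρ • x) := by
  rw [derivNorm, derivSq_comp_smul, mul_comm 2 k, pow_mul, Real.sqrt_mul (sq_nonneg _),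
    Real.sqrt_sq (pow_nonneg hρ k), derivNorm]

lemma norm_gradient_sq (f : EuclideanSpace ℝ (Fin n) → ℝ) (x : EuclideanSpace ℝ (Fin n)) :
    ‖gradient f x‖ ^ 2 = derivSq 1 f x := by
  have hcoord (i : Fin n) : gradient f x i = pderiv i f x := by
    rw [pderiv, ← InnerProductSpace.toDual_symm_apply, EuclideanSpace.inner_single_right]
    simp [gradient]
  simp only [EuclideanSpace.real_norm_sq_eq, derivSq_one_apply, hcoord]

lemma integral_iterate_laplacian_mul (k : ℕ) (hf : ContDiff ℝ ∞ f) (hg : ContDiff ℝ ∞ g)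
    (hc : HasCompactSupport g) :
    ∫ x, laplacian^[k] f x * g x = (-1) ^ k * ∫ x, derivInner k f g x := by
  induction k generalizing f g with
  | zero => simp [derivInner]
  | succ k ih =>
    simp only [derivInner_succ_apply]
    rw [Function.iterate_succ_apply',
      integral_laplacian_mul (contDiff_iterate_laplacian k hf) hg hc,
      integral_finsetSum _ fun i _ => integrable_derivInner k (contDiff_pderiv hf i)
        (contDiff_pderiv hg i) (hasCompactSupport_pderiv hc i), pow_succ, mul_assoc, neg_one_mul,
      mul_neg, Finset.mul_sum]
    simp only [pderiv_iterate_laplacian k hf,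
      fun i => ih (contDiff_pderiv hf i) (contDiff_pderiv hg i) (hasCompactSupport_pderiv hc i)]

lemma integral_laplacian_sq (hf : ContDiff ℝ ∞ f) (hc : HasCompactSupport f) :
    ∫ x, laplacian f x ^ 2 = ∫ x, derivSq 2 f x := by
  simp only [sq]
  rw [integral_laplacian_mul_comm hf (contDiff_laplacian hf) hc (hasCompactSupport_laplacian hc)]
  simpa [derivSq] using integral_iterate_laplacian_mul 2 hf hf hc

lemma integral_norm_gradient_laplacian_sq (hf : ContDiff ℝ ∞ f) (hc : HasCompactSupport f) :
    ∫ x, ‖gradient (laplacian f) x‖ ^ 2 = ∫ x, derivSq 3 f x := by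
  have hf' := contDiff_pderiv hf
  have hc' := hasCompactSupport_pderiv hc
  simp only [norm_gradient_sq, derivSq_one_apply, derivSq_succ_apply 2, pderiv_laplacian hf]
  rw [integral_finsetSum, integral_finsetSum]
  · exact Finset.sum_congr rfl fun i _ => integral_laplacian_sq (hf' i) (hc' i)
  · exact fun i _ => integrable_derivInner 2 (hf' i) (hf' i) (hc' i)
  · intro i _
    simp only [sq]
    exact ((contDiff_laplacian (hf' i)).continuous.mul
      (contDiff_laplacian (hf' i)).continuous).integrable_of_hasCompactSupport
        (hasCompactSupport_laplacian (hc' i)).mul_left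

/-! ### The third-order Leibniz commutator -/

/-- The third-order partial derivative `∂ᵢ∂ⱼ∂ₖf` with multi-index `I = (i, j, k)`. -/
def pderiv₃ (I : Fin n × Fin n × Fin n) (f : EuclideanSpace ℝ (Fin n) → ℝ) :
    EuclideanSpace ℝ (Fin n) → ℝ :=
  pderiv I.2.2 (pderiv I.2.1 (pderiv I.1 f))

/-- The bound `3|∇²f||∇g| + 3|∇f||∇²g| + |f||∇³g|` for the terms of `∂ᵢ∂ⱼ∂ₖ(fg)` in which `g` is
differentiated. -/
def commutatorBound (f g : EuclideanSpace ℝ (Fin n) → ℝ) (x : EuclideanSpace ℝ (Fin n)) : ℝ :=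
  3 * derivNorm 2 f x * derivNorm 1 g x + 3 * derivNorm 1 f x * derivNorm 2 g x +
    derivNorm 0 f x * derivNorm 3 g x

lemma derivInner_three_apply (f g : EuclideanSpace ℝ (Fin n) → ℝ)
    (x : EuclideanSpace ℝ (Fin n)) :
    derivInner 3 f g x = ∑ I, pderiv₃ I f x * pderiv₃ I g x := by
  simp [derivInner, pderiv₃, Fintype.sum_prod_type]

lemma derivSq_three_apply (f : EuclideanSpace ℝ (Fin n) → ℝ) (x : EuclideanSpace ℝ (Fin n)) :
    derivSq 3 f x = ∑ I, pderiv₃ I f x ^ 2 := by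
  simp only [derivSq, derivInner_three_apply, sq]

lemma abs_le_derivNorm_zero (f : EuclideanSpace ℝ (Fin n) → ℝ) (x : EuclideanSpace ℝ (Fin n)) :
    |f x| ≤ derivNorm 0 f x :=
  (derivNorm_zero f x).ge

lemma abs_pderiv_le (f : EuclideanSpace ℝ (Fin n) → ℝ) (i : Fin n)
    (x : EuclideanSpace ℝ (Fin n)) : |pderiv i f x| ≤ derivNorm 1 f x :=
  (abs_le_derivNorm_zero _ x).trans (derivNorm_pderiv_le 0 f i x)

lemma abs_pderiv_pderiv_le (f : EuclideanSpace ℝ (Fin n) → ℝ) (i j : Fin n)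
    (x : EuclideanSpace ℝ (Fin n)) : |pderiv j (pderiv i f) x| ≤ derivNorm 2 f x :=
  (abs_pderiv_le _ j x).trans (derivNorm_pderiv_le 1 f i x)

lemma abs_pderiv₃_le (f : EuclideanSpace ℝ (Fin n) → ℝ) (I : Fin n × Fin n × Fin n)
    (x : EuclideanSpace ℝ (Fin n)) : |pderiv₃ I f x| ≤ derivNorm 3 f x :=
  (abs_pderiv_pderiv_le _ I.2.1 I.2.2 x).trans (derivNorm_pderiv_le 2 f I.1 x)

lemma commutatorBound_nonneg (f g : EuclideanSpace ℝ (Fin n) → ℝ)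
    (x : EuclideanSpace ℝ (Fin n)) : 0 ≤ commutatorBound f g x := by
  have hN := fun k (h : EuclideanSpace ℝ (Fin n) → ℝ) => derivNorm_nonneg k h x
  unfold commutatorBound
  exact add_nonneg (add_nonneg (mul_nonneg (mul_nonneg zero_le_three (hN _ _)) (hN _ _))
    (mul_nonneg (mul_nonneg zero_le_three (hN _ _)) (hN _ _))) (mul_nonneg (hN _ _) (hN _ _))

lemma pderiv_pderiv_mul (hf : ContDiff ℝ ∞ f) (hg : ContDiff ℝ ∞ g) (i j : Fin n) :
    pderiv j (pderiv i (f * g)) = pderiv j (pderiv i f) * g + pderiv i f * pderiv j g +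
      (pderiv j f * pderiv i g + f * pderiv j (pderiv i g)) := by
  have hf' := contDiff_pderiv hf i
  have hg' := contDiff_pderiv hg i
  rw [pderiv_mul hf hg, pderiv_add (smooth_mul hf' hg) (smooth_mul hf hg'), pderiv_mul hf' hg,
    pderiv_mul hf hg']

lemma pderiv₃_mul_sub (hf : ContDiff ℝ ∞ f) (hg : ContDiff ℝ ∞ g) (I : Fin n × Fin n × Fin n) :
    pderiv₃ I (f * g) - pderiv₃ I f * g =
      pderiv I.2.1 (pderiv I.1 f) * pderiv I.2.2 g + pderiv I.2.2 (pderiv I.1 f) * pderiv I.2.1 g +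
      pderiv I.2.2 (pderiv I.2.1 f) * pderiv I.1 g + pderiv I.1 f * pderiv I.2.2 (pderiv I.2.1 g) +
      pderiv I.2.1 f * pderiv I.2.2 (pderiv I.1 g) + pderiv I.2.2 f * pderiv I.2.1 (pderiv I.1 g) +
      f * pderiv₃ I g := by
  have hf' := contDiff_pderiv hf I.1
  have hg' := contDiff_pderiv hg I.1
  have hl := smooth_mul hf' hg
  have hr := smooth_mul hf hg'
  rw [pderiv₃, pderiv_mul hf hg, pderiv_add hl hr,
    pderiv_add (contDiff_pderiv hl _) (contDiff_pderiv hr _),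
    pderiv_pderiv_mul hf' hg, pderiv_pderiv_mul hf hg']
  unfold pderiv₃
  ring

lemma abs_pderiv₃_mul_sub_le (hf : ContDiff ℝ ∞ f) (hg : ContDiff ℝ ∞ g)
    (I : Fin n × Fin n × Fin n) (x : EuclideanSpace ℝ (Fin n)) :
    |pderiv₃ I (f * g) x - pderiv₃ I f x * g x| ≤ commutatorBound f g x := by
  obtain ⟨i, j, m⟩ := I
  have hprod {a b A B : ℝ} (ha : |a| ≤ A) (hb : |b| ≤ B) : |a * b| ≤ A * B :=
    abs_mul a b ▸ mul_le_mul ha hb (abs_nonneg b) ((abs_nonneg a).trans ha)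
  have hf₂ := fun a b => abs_pderiv_pderiv_le f a b x
  have hg₂ := fun a b => abs_pderiv_pderiv_le g a b x
  have hf₁ := fun a => abs_pderiv_le f a x
  have hg₁ := fun a => abs_pderiv_le g a x
  have h₁ := abs_le.1 (hprod (hf₂ i j) (hg₁ m))
  have h₂ := abs_le.1 (hprod (hf₂ i m) (hg₁ j))
  have h₃ := abs_le.1 (hprod (hf₂ j m) (hg₁ i))
  have h₄ := abs_le.1 (hprod (hf₁ i) (hg₂ j m))
  have h₅ := abs_le.1 (hprod (hf₁ j) (hg₂ i m))
  have h₆ := abs_le.1 (hprod (hf₁ m) (hg₂ i j))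
  have h₇ := abs_le.1 (hprod (abs_le_derivNorm_zero f x) (abs_pderiv₃_le g (i, j, m) x))
  have hexp := congrFun (pderiv₃_mul_sub hf hg (i, j, m)) x
  simp only [Pi.sub_apply, Pi.mul_apply, Pi.add_apply] at hexp
  rw [hexp, commutatorBound, abs_le]
  constructor <;> linarith

lemma derivSq_three_mul_le (hf : ContDiff ℝ ∞ f) (hg : ContDiff ℝ ∞ g) (hε : 0 < ε)
    (x : EuclideanSpace ℝ (Fin n)) :
    derivSq 3 (f * g) x ≤ (1 + ε) * (derivSq 3 f x * g x ^ 2) +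
      (1 + ε⁻¹) * (n ^ 3 * commutatorBound f g x ^ 2) := by
  have hterm (I : Fin n × Fin n × Fin n) : pderiv₃ I (f * g) x ^ 2 ≤
      (1 + ε) * (pderiv₃ I f x ^ 2 * g x ^ 2) + (1 + ε⁻¹) * commutatorBound f g x ^ 2 := by
    set a := pderiv₃ I f x * g x with ha
    set r := pderiv₃ I (f * g) x - a with hr
    have hcomm : r ^ 2 ≤ commutatorBound f g x ^ 2 :=
      sq_le_sq' (abs_le.1 (abs_pderiv₃_mul_sub_le hf hg I x)).1
        (abs_le.1 (abs_pderiv₃_mul_sub_le hf hg I x)).2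
    have hyoung : 2 * a * r ≤ ε * a ^ 2 + ε⁻¹ * r ^ 2 := by
      have h := mul_nonneg (inv_nonneg.2 hε.le) (sq_nonneg (ε * a - r))
      have heq : ε⁻¹ * (ε * a - r) ^ 2 = ε * a ^ 2 + ε⁻¹ * r ^ 2 - 2 * a * r := by
        field_simp
        ring
      linarith
    calc pderiv₃ I (f * g) x ^ 2 = (a + r) ^ 2 := by rw [hr]; ring
      _ ≤ (1 + ε) * a ^ 2 + (1 + ε⁻¹) * r ^ 2 := by linarith
      _ ≤ (1 + ε) * a ^ 2 + (1 + ε⁻¹) * commutatorBound f g x ^ 2 := by gcongr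
      _ = _ := by rw [ha]; ring
  calc derivSq 3 (f * g) x = ∑ I, pderiv₃ I (f * g) x ^ 2 := derivSq_three_apply _ x
    _ ≤ _ := Finset.sum_le_sum fun I _ => hterm I
    _ = _ := by
      simp only [derivSq_three_apply, Finset.sum_add_distrib, ← Finset.mul_sum, ← Finset.sum_mul,
        Finset.sum_const, Finset.card_univ, Fintype.card_prod, Fintype.card_fin, nsmul_eq_mul,
        Nat.cast_mul]
      ring

lemma abs_derivInner_three_mul_sub_le (hf : ContDiff ℝ ∞ f) (hg : ContDiff ℝ ∞ g)
    (u : EuclideanSpace ℝ (Fin n) → ℝ) (x : EuclideanSpace ℝ (Fin n)) :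
    |derivInner 3 u (f * g) x - derivInner 3 u f x * g x| ≤
      n ^ 3 * (derivNorm 3 u x * commutatorBound f g x) := by
  have hterm (I : Fin n × Fin n × Fin n) :
      |pderiv₃ I u x * (pderiv₃ I (f * g) x - pderiv₃ I f x * g x)| ≤
        derivNorm 3 u x * commutatorBound f g x := by
    rw [abs_mul]
    exact mul_le_mul (abs_pderiv₃_le u I x) (abs_pderiv₃_mul_sub_le hf hg I x) (abs_nonneg _)
      (derivNorm_nonneg 3 u x)
  calc |derivInner 3 u (f * g) x - derivInner 3 u f x * g x|
      = |∑ I, pderiv₃ I u x * (pderiv₃ I (f * g) x - pderiv₃ I f x * g x)| := by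
        simp only [derivInner_three_apply, Finset.sum_mul, ← Finset.sum_sub_distrib, mul_sub,
          mul_assoc]
    _ ≤ ∑ _I : Fin n × Fin n × Fin n, derivNorm 3 u x * commutatorBound f g x :=
        (Finset.abs_sum_le_sum_abs _ _).trans (Finset.sum_le_sum fun I _ => hterm I)
    _ = n ^ 3 * (derivNorm 3 u x * commutatorBound f g x) := by
        rw [Finset.sum_const, Finset.card_univ, nsmul_eq_mul]
        simp only [Fintype.card_prod, Fintype.card_fin, Nat.cast_mul]
        ring

/-! ### Cut-off functions -/

/-- A fixed smooth function equal to `1` on the unit ball and supported in the ball of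
radius `2`. -/
def baseCutoff (n : ℕ) : ContDiffBump (0 : EuclideanSpace ℝ (Fin n)) :=
  ⟨1, 2, one_pos, one_lt_two⟩

/-- The cut-off at scale `ρ⁻¹`. The parameter is the inverse radius, so that exhausting the space
means `ρ → 0⁺`. -/
def cut (ρ : ℝ) (x : EuclideanSpace ℝ (Fin n)) : ℝ := baseCutoff n (ρ • x)

lemma contDiff_cut (ρ : ℝ) : ContDiff ℝ ∞ (cut ρ : EuclideanSpace ℝ (Fin n) → ℝ) :=
  (baseCutoff n).contDiff.comp (contDiff_const_smul ρ)

lemma contDiff_cut_pow (ρ : ℝ) (k : ℕ) :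
    ContDiff ℝ ∞ (cut ρ ^ k : EuclideanSpace ℝ (Fin n) → ℝ) :=
  (contDiff_cut ρ).pow k

lemma cut_nonneg (ρ : ℝ) (x : EuclideanSpace ℝ (Fin n)) : 0 ≤ cut ρ x :=
  (baseCutoff n).nonneg

lemma cut_le_one (ρ : ℝ) (x : EuclideanSpace ℝ (Fin n)) : cut ρ x ≤ 1 :=
  (baseCutoff n).le_one

lemma cut_pow_nonneg (ρ : ℝ) (k : ℕ) (x : EuclideanSpace ℝ (Fin n)) : 0 ≤ cut ρ x ^ k :=
  pow_nonneg (cut_nonneg ρ x) k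

lemma cut_pow_le_one (ρ : ℝ) (k : ℕ) (x : EuclideanSpace ℝ (Fin n)) : cut ρ x ^ k ≤ 1 :=
  pow_le_one₀ (cut_nonneg ρ x) (cut_le_one ρ x)

lemma norm_smul_of_nonneg (hρ : 0 ≤ ρ) (x : EuclideanSpace ℝ (Fin n)) : ‖ρ • x‖ = ρ * ‖x‖ := by
  rw [norm_smul, Real.norm_of_nonneg hρ]

lemma cut_eq_one (hρ : 0 ≤ ρ) (hx : ρ * ‖x‖ ≤ 1) : cut ρ x = 1 :=
  (baseCutoff n).one_of_mem_closedBall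
    (mem_closedBall_zero_iff.2 ((norm_smul_of_nonneg hρ x).trans_le hx))

lemma baseCutoff_eq_zero (hx : 2 ≤ ‖x‖) : baseCutoff n x = 0 :=
  (baseCutoff n).zero_of_le_dist (hx.trans_eq (dist_zero_right x).symm)

lemma cut_eq_zero (hρ : 0 ≤ ρ) (hx : 2 ≤ ρ * ‖x‖) : cut ρ x = 0 :=
  baseCutoff_eq_zero (hx.trans_eq (norm_smul_of_nonneg hρ x).symm)

lemma cut_pow_eventuallyEq_one (hρ : 0 ≤ ρ) (k : ℕ) (hx : ρ * ‖x‖ < 1) :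
    cut ρ ^ k =ᶠ[𝓝 x] fun _ => 1 := by
  filter_upwards [(continuous_const.mul continuous_norm).continuousAt.eventually_lt
    continuousAt_const hx] with y hy
  rw [Pi.pow_apply, cut_eq_one hρ hy.le, one_pow]

lemma hasCompactSupport_cut (hρ : 0 < ρ) :
    HasCompactSupport (cut ρ : EuclideanSpace ℝ (Fin n) → ℝ) := by
  refine HasCompactSupport.intro (isCompact_closedBall 0 (2 / ρ)) fun x hx => ?_
  rw [mem_closedBall_zero_iff, not_le, div_lt_iff₀' hρ] at hx
  exact cut_eq_zero hρ.le hx.le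

lemma hasCompactSupport_cut_pow (hρ : 0 < ρ) (hk : k ≠ 0) :
    HasCompactSupport (cut ρ ^ k : EuclideanSpace ℝ (Fin n) → ℝ) :=
  (hasCompactSupport_cut hρ).comp_left (g := fun t => t ^ k) (zero_pow hk)

lemma integrable_mul_cut_pow (hf : Continuous f) (hρ : 0 < ρ) (hk : k ≠ 0) :
    Integrable fun x => f x * cut ρ x ^ k :=
  (hf.mul (contDiff_cut_pow ρ k).continuous).integrable_of_hasCompactSupport
    (hasCompactSupport_cut_pow hρ hk).mul_left

lemma pderiv_pow_mul (hf : ContDiff ℝ ∞ f) (hg : ContDiff ℝ ∞ g) (k : ℕ) (i : Fin n) :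
    pderiv i (f ^ (k + 1) * g) = f ^ k * ((k + 1 : ℝ) • (pderiv i f * g) + f * pderiv i g) := by
  have hpow : pderiv i (f ^ (k + 1)) = (k + 1 : ℝ) • (f ^ k * pderiv i f) := by
    funext x
    simp [pderiv, fderiv_pow _ (differentiable_of_smooth hf x), mul_assoc]
  have hfk : ContDiff ℝ ∞ (f ^ (k + 1)) := hf.pow _
  rw [pderiv_mul hfk hg, hpow]
  funext x
  simp only [Pi.add_apply, Pi.mul_apply, Pi.smul_apply, Pi.pow_apply, smul_eq_mul]
  ring

lemma derivNorm_pow_mul_le (hf : ContDiff ℝ ∞ f) (hc : HasCompactSupport f) (hf0 : 0 ≤ f)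
    (hg : ContDiff ℝ ∞ g) {a : ℕ} (ha : a ≠ 0) (k : ℕ) :
    ∃ M ≥ 0, ∀ x, derivNorm k (f ^ (a + k) * g) x ≤ M * f x ^ a := by
  have hpow (x) : 0 ≤ f x ^ a := pow_nonneg (hf0 x) a
  induction k generalizing g with
  | zero =>
    obtain ⟨C, hC⟩ := hc.isCompact.exists_bound_of_continuousOn hg.continuous.continuousOn
    refine ⟨|C|, abs_nonneg C, fun x => ?_⟩
    rw [derivNorm_zero, Pi.mul_apply, Pi.pow_apply, abs_mul, add_zero, abs_of_nonneg (hpow x),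
      mul_comm]
    by_cases hx : x ∈ tsupport f
    · exact mul_le_mul_of_nonneg_right ((hC x hx).trans (le_abs_self C)) (hpow x)
    · simp [image_eq_zero_of_notMem_tsupport hx, ha]
  | succ k ih =>
    let F (i : Fin n) := ((a + k : ℕ) + 1 : ℝ) • (pderiv i f * g) + f * pderiv i g
    have hF (i : Fin n) : ContDiff ℝ ∞ (F i) :=
      (contDiff_const.smul (smooth_mul (contDiff_pderiv hf i) hg)).add
        (smooth_mul hf (contDiff_pderiv hg i))
    choose M _ hM using fun i => ih (hF i)
    refine ⟨√(∑ i, M i ^ 2), Real.sqrt_nonneg _, fun x => Real.sqrt_le_iff.2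
      ⟨mul_nonneg (Real.sqrt_nonneg _) (hpow x), ?_⟩⟩
    rw [mul_pow, Real.sq_sqrt (Finset.sum_nonneg fun i _ => sq_nonneg _), derivSq_succ_apply,
      Finset.sum_mul]
    refine Finset.sum_le_sum fun i _ => ?_
    rw [← add_assoc, pderiv_pow_mul hf hg, ← derivNorm_sq, ← mul_pow]
    exact pow_le_pow_left₀ (derivNorm_nonneg k _ x) (hM i x) 2

lemma derivNorm_cut_pow_le (n : ℕ) {a : ℕ} (ha : a ≠ 0) (k : ℕ) :
    ∃ M ≥ 0, ∀ ρ > 0, ∀ x : EuclideanSpace ℝ (Fin n),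
      derivNorm k (cut ρ ^ (a + k)) x ≤ M * (ρ ^ k * cut ρ x ^ a) := by
  obtain ⟨M, hM0, hM⟩ := derivNorm_pow_mul_le (baseCutoff n).contDiff
    (baseCutoff n).hasCompactSupport (fun _ => (baseCutoff n).nonneg) (contDiff_const (c := 1)) ha k
  refine ⟨M, hM0, fun ρ hρ x => ?_⟩
  calc derivNorm k (cut ρ ^ (a + k)) x
      = ρ ^ k * derivNorm k (⇑(baseCutoff n) ^ (a + k) * fun _ => 1) (ρ • x) := by
        rw [← derivNorm_comp_smul k _ hρ.le]
        simp [cut, Pi.pow_def]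
    _ ≤ ρ ^ k * (M * baseCutoff n (ρ • x) ^ a) := by gcongr; exact hM _
    _ = M * (ρ ^ k * cut ρ x ^ a) := by rw [cut]; ring

/-- The size `ρ³⁻ᵏ|∇ᵏu|` of the derivatives of order `k ≤ 3`, scaled like `|∇³u|` and multiplied by
a power of the cut-off that can absorb `k` further derivatives falling on it. -/
def scaledNorm (l : ℕ) (u : EuclideanSpace ℝ (Fin n) → ℝ) (ρ : ℝ) (k : ℕ)
    (x : EuclideanSpace ℝ (Fin n)) : ℝ :=
  ρ ^ (3 - k) * derivNorm k u x * cut ρ x ^ (l + k)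

lemma scaledNorm_nonneg (hρ : 0 ≤ ρ) (l : ℕ) (u : EuclideanSpace ℝ (Fin n) → ℝ) (k : ℕ)
    (x : EuclideanSpace ℝ (Fin n)) : 0 ≤ scaledNorm l u ρ k x :=
  mul_nonneg (mul_nonneg (pow_nonneg hρ _) (derivNorm_nonneg k u x)) (cut_pow_nonneg ρ _ x)

lemma commutatorBound_cut_pow_le (n : ℕ) {a : ℕ} (ha : a ≠ 0) :
    ∃ C ≥ 0, ∀ ρ > 0, ∀ (u : EuclideanSpace ℝ (Fin n) → ℝ) (x : EuclideanSpace ℝ (Fin n)),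
      commutatorBound u (cut ρ ^ (a + 3)) x ≤ C * ∑ k ∈ Finset.range 3, scaledNorm a u ρ k x := by
  obtain ⟨M₁, hM₁0, hM₁⟩ := derivNorm_cut_pow_le n (a := a + 2) (by omega) 1
  obtain ⟨M₂, hM₂0, hM₂⟩ := derivNorm_cut_pow_le n (a := a + 1) (by omega) 2
  obtain ⟨M₃, hM₃0, hM₃⟩ := derivNorm_cut_pow_le n ha 3
  refine ⟨3 * M₁ + 3 * M₂ + M₃, by positivity, fun ρ hρ u x => ?_⟩
  have hN := fun k => derivNorm_nonneg k u x
  have hs := fun k => scaledNorm_nonneg hρ.le a u k x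
  have h₂ : 3 * derivNorm 2 u x * derivNorm 1 (cut ρ ^ (a + 3)) x ≤
      3 * M₁ * scaledNorm a u ρ 2 x := by
    have := mul_le_mul_of_nonneg_left (hM₁ ρ hρ x) (mul_nonneg zero_le_three (hN 2))
    exact this.trans_eq (by simp only [scaledNorm]; ring)
  have h₁ : 3 * derivNorm 1 u x * derivNorm 2 (cut ρ ^ (a + 3)) x ≤
      3 * M₂ * scaledNorm a u ρ 1 x := by
    have := mul_le_mul_of_nonneg_left (hM₂ ρ hρ x) (mul_nonneg zero_le_three (hN 1))
    exact this.trans_eq (by simp only [scaledNorm]; ring)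
  have h₀ : derivNorm 0 u x * derivNorm 3 (cut ρ ^ (a + 3)) x ≤ M₃ * scaledNorm a u ρ 0 x :=
    (mul_le_mul_of_nonneg_left (hM₃ ρ hρ x) (hN 0)).trans_eq
      (by simp only [scaledNorm]; ring)
  have hsum (k) (hk : k ∈ Finset.range 3) :
      scaledNorm a u ρ k x ≤ ∑ k ∈ Finset.range 3, scaledNorm a u ρ k x :=
    Finset.single_le_sum (fun k _ => hs k) hk
  calc commutatorBound u (cut ρ ^ (a + 3)) x
      ≤ 3 * M₁ * scaledNorm a u ρ 2 x + 3 * M₂ * scaledNorm a u ρ 1 x +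
          M₃ * scaledNorm a u ρ 0 x := add_le_add (add_le_add h₂ h₁) h₀
    _ ≤ 3 * M₁ * ∑ k ∈ Finset.range 3, scaledNorm a u ρ k x +
          3 * M₂ * ∑ k ∈ Finset.range 3, scaledNorm a u ρ k x +
          M₃ * ∑ k ∈ Finset.range 3, scaledNorm a u ρ k x := by
        gcongr <;> exact hsum _ (by simp)
    _ = _ := by ring

/-! ### Interpolation between scaled energies -/

/-- The energy `∫ ρ⁶⁻²ᵏ|∇ᵏu|²` localized by a power of the cut-off. -/
def energy (l : ℕ) (u : EuclideanSpace ℝ (Fin n) → ℝ) (ρ : ℝ) (k : ℕ) : ℝ :=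
  ∫ x, scaledNorm l u ρ k x ^ 2

lemma energy_nonneg (l : ℕ) (u : EuclideanSpace ℝ (Fin n) → ℝ) (ρ : ℝ) (k : ℕ) :
    0 ≤ energy l u ρ k :=
  integral_nonneg fun _ => sq_nonneg _

lemma scaledNorm_sq (l : ℕ) (u : EuclideanSpace ℝ (Fin n) → ℝ) (ρ : ℝ) (k : ℕ)
    (x : EuclideanSpace ℝ (Fin n)) :
    scaledNorm l u ρ k x ^ 2 =
      ρ ^ (2 * (3 - k)) * (derivSq k u x * cut ρ x ^ (2 * (l + k))) := by
  rw [scaledNorm, ← derivNorm_sq]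
  ring

lemma energy_eq (l : ℕ) (u : EuclideanSpace ℝ (Fin n) → ℝ) (ρ : ℝ) (k : ℕ) :
    energy l u ρ k = ρ ^ (2 * (3 - k)) * ∫ x, derivSq k u x * cut ρ x ^ (2 * (l + k)) := by
  simp only [energy, scaledNorm_sq, integral_const_mul]

lemma integrable_scaledNorm_sq (hu : ContDiff ℝ ∞ u) (hρ : 0 < ρ) (hl : l ≠ 0) (k : ℕ) :
    Integrable fun x => scaledNorm l u ρ k x ^ 2 := by
  simp only [scaledNorm_sq]
  exact (integrable_mul_cut_pow (contDiff_derivSq k hu).continuous hρ (by omega)).const_mul _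

/-- Young's inequality for the integrand obtained from `b²c²ˢ⁺²` by one integration by parts, where
`a`, `b`, `d` stand for a function and its first and second derivatives, and `c` for a cut-off such
that `c²ˢ⁺²` has derivative `w`. -/
lemma sq_mul_neg_mul_le {δ M a b c d w : ℝ} (hδ : 0 < δ)
    (hw : |w| ≤ M * (ρ * c ^ (2 * s + 1))) :
    ρ ^ 2 * -(a * (d * c ^ (2 * s + 2) + b * w)) ≤
      δ / 2 * (d ^ 2 * c ^ (2 * s + 4)) + ρ ^ 2 / 2 * (b ^ 2 * c ^ (2 * s + 2)) +
        (1 / (2 * δ) + M ^ 2 / 2) * (ρ ^ 4 * (a ^ 2 * c ^ (2 * s))) := by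
  have hfirst : -(ρ ^ 2 * (a * (d * c ^ (2 * s + 2)))) ≤
      δ / 2 * (d ^ 2 * c ^ (2 * s + 4)) + 1 / (2 * δ) * (ρ ^ 4 * (a ^ 2 * c ^ (2 * s))) := by
    have hsq : 0 ≤ 1 / (2 * δ) * (δ * (d * c ^ (s + 2)) + ρ ^ 2 * a * c ^ s) ^ 2 := by positivity
    have hexp : 1 / (2 * δ) * (δ * (d * c ^ (s + 2)) + ρ ^ 2 * a * c ^ s) ^ 2 =
        δ / 2 * (d ^ 2 * c ^ (2 * s + 4)) + 1 / (2 * δ) * (ρ ^ 4 * (a ^ 2 * c ^ (2 * s))) +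
          ρ ^ 2 * (a * (d * c ^ (2 * s + 2))) := by
      field_simp
      ring
    linarith
  have hsecond : -(ρ ^ 2 * (a * (b * w))) ≤
      ρ ^ 2 / 2 * (b ^ 2 * c ^ (2 * s + 2)) + M ^ 2 / 2 * (ρ ^ 4 * (a ^ 2 * c ^ (2 * s))) := by
    calc -(ρ ^ 2 * (a * (b * w))) ≤ |ρ ^ 2 * (a * (b * w))| := neg_le_abs _
      _ = ρ ^ 2 * (|a| * |b| * |w|) := by
        rw [abs_mul, abs_mul, abs_mul, abs_sq, mul_assoc |a|]
      _ ≤ ρ ^ 2 * (|a| * |b| * (M * (ρ * c ^ (2 * s + 1)))) := by gcongr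
      _ ≤ ρ ^ 2 / 2 * (|b| ^ 2 * c ^ (2 * s + 2)) +
          M ^ 2 / 2 * (ρ ^ 4 * (|a| ^ 2 * c ^ (2 * s))) := by
        have hsq := sq_nonneg (ρ * |b| * c ^ (s + 1) - M * ρ ^ 2 * |a| * c ^ s)
        ring_nf at hsq ⊢
        linarith
      _ = _ := by rw [sq_abs, sq_abs]
  linarith

lemma integral_pderiv_sq_mul (hv : ContDiff ℝ ∞ v) (hg : ContDiff ℝ ∞ g)
    (hc : HasCompactSupport g) (i : Fin n) :
    ∫ x, pderiv i v x ^ 2 * g x = -∫ x, v x * pderiv i (pderiv i v * g) x := by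
  rw [← integral_pderiv_mul (contDiff_one_of_smooth hv)
    (contDiff_one_of_smooth (smooth_mul (contDiff_pderiv hv i) hg)) hc.mul_left]
  simp only [Pi.mul_apply, sq, mul_assoc]

lemma sq_mul_integral_pderiv_sq_le (n : ℕ) (hs : s ≠ 0) {δ : ℝ} (hδ : 0 < δ) :
    ∃ C ≥ 0, ∀ v : EuclideanSpace ℝ (Fin n) → ℝ, ContDiff ℝ ∞ v → ∀ ρ > 0, ∀ i,
      ρ ^ 2 * ∫ x, pderiv i v x ^ 2 * cut ρ x ^ (2 * s + 2) ≤
        δ * (∫ x, derivSq 1 (pderiv i v) x * cut ρ x ^ (2 * s + 4)) +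
          C * (ρ ^ 4 * ∫ x, v x ^ 2 * cut ρ x ^ (2 * s)) := by
  obtain ⟨M, -, hM⟩ := derivNorm_cut_pow_le n (a := 2 * s + 1) (by omega) 1
  refine ⟨2 * (1 / (2 * δ) + M ^ 2 / 2), by positivity, fun v hv ρ hρ i => ?_⟩
  have hi := contDiff_pderiv hv i
  have hw := contDiff_cut_pow (n := n) ρ (2 * s + 2)
  have hg := smooth_mul hi hw
  have hgc : HasCompactSupport (pderiv i v * cut ρ ^ (2 * s + 2)) :=
    (hasCompactSupport_cut_pow hρ (by omega)).mul_left
  have hibp := integral_pderiv_sq_mul hv hw (hasCompactSupport_cut_pow hρ (by omega)) i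
  have hint₀ := (integrable_mul_cut_pow (hv.continuous.pow 2) hρ (k := 2 * s)
    (by omega)).const_mul (ρ ^ 4)
  have hint₁ := integrable_mul_cut_pow (hi.continuous.pow 2) hρ (k := 2 * s + 2) (by omega)
  have hint₂ := integrable_mul_cut_pow (contDiff_derivSq 1 hi).continuous hρ (k := 2 * s + 4)
    (by omega)
  have hint : Integrable fun x => -(v x * pderiv i (pderiv i v * cut ρ ^ (2 * s + 2)) x) :=
    ((hv.continuous.mul (contDiff_pderiv hg i).continuous).integrable_of_hasCompactSupport
      (hasCompactSupport_pderiv hgc i).mul_left).neg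
  have hmono := integral_mono (hint.const_mul (ρ ^ 2)) (((hint₂.const_mul (δ / 2)).add
    (hint₁.const_mul (ρ ^ 2 / 2))).add (hint₀.const_mul (1 / (2 * δ) + M ^ 2 / 2))) fun x => by
      have hyoung := sq_mul_neg_mul_le (ρ := ρ) (M := M) (s := s) (a := v x)
        (b := pderiv i v x) (c := cut ρ x) (d := pderiv i (pderiv i v) x) hδ
        ((abs_pderiv_le _ i x).trans ((hM ρ hρ x).trans_eq (by ring)))
      have hd : pderiv i (pderiv i v) x ^ 2 * cut ρ x ^ (2 * s + 4) ≤
          derivSq 1 (pderiv i v) x * cut ρ x ^ (2 * s + 4) :=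
        mul_le_mul_of_nonneg_right ((derivSq_zero_apply _ x).symm.trans_le
          (derivSq_pderiv_le 0 _ i x)) (cut_pow_nonneg ρ _ x)
      simp only [pderiv_mul hi hw, Pi.add_apply, Pi.mul_apply, Pi.pow_apply]
      exact hyoung.trans (by gcongr)
  rw [integral_add' (by exact (hint₂.const_mul _).add (hint₁.const_mul _)) (hint₀.const_mul _),
    integral_add' (hint₂.const_mul _) (hint₁.const_mul _)] at hmono
  simp only [integral_const_mul, integral_neg, ← hibp, Pi.pow_apply] at hmono
  linarith

lemma integral_derivSq_succ_mul_cut_pow (hv : ContDiff ℝ ∞ v) (hρ : 0 < ρ) (k : ℕ) {a : ℕ}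
    (ha : a ≠ 0) :
    ∫ x, derivSq (k + 1) v x * cut ρ x ^ a = ∑ i, ∫ x, derivSq k (pderiv i v) x * cut ρ x ^ a := by
  simp only [derivSq_succ_apply, Finset.sum_mul]
  exact integral_finsetSum _ fun i _ =>
    integrable_mul_cut_pow (contDiff_derivSq k (contDiff_pderiv hv i)).continuous hρ ha

lemma sq_mul_integral_derivSq_succ_le (n : ℕ) (hs : s ≠ 0) {δ : ℝ} (hδ : 0 < δ) (k : ℕ) :
    ∃ C ≥ 0, ∀ v : EuclideanSpace ℝ (Fin n) → ℝ, ContDiff ℝ ∞ v → ∀ ρ > 0,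
      ρ ^ 2 * ∫ x, derivSq (k + 1) v x * cut ρ x ^ (2 * s + 2) ≤
        δ * (∫ x, derivSq (k + 2) v x * cut ρ x ^ (2 * s + 4)) +
          C * (ρ ^ 4 * ∫ x, derivSq k v x * cut ρ x ^ (2 * s)) := by
  induction k with
  | zero =>
    obtain ⟨C, hC0, hC⟩ := sq_mul_integral_pderiv_sq_le n hs hδ
    refine ⟨n * C, by positivity, fun v hv ρ hρ => ?_⟩
    have hsum := Finset.sum_le_sum fun i (_ : i ∈ Finset.univ) => hC v hv ρ hρ i
    rw [integral_derivSq_succ_mul_cut_pow hv hρ 1 (by omega),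
      integral_derivSq_succ_mul_cut_pow hv hρ 0 (by omega)]
    simpa [derivSq_zero_apply, Finset.sum_add_distrib, ← Finset.mul_sum, mul_assoc] using hsum
  | succ k ih =>
    obtain ⟨C, hC0, hC⟩ := ih
    refine ⟨C, hC0, fun v hv ρ hρ => ?_⟩
    have hsum := Finset.sum_le_sum fun i (_ : i ∈ Finset.univ) => hC _ (contDiff_pderiv hv i) ρ hρ
    rw [integral_derivSq_succ_mul_cut_pow hv hρ (k + 2) (by omega),
      integral_derivSq_succ_mul_cut_pow hv hρ (k + 1) (by omega),
      integral_derivSq_succ_mul_cut_pow hv hρ k (by omega)]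
    simpa only [Finset.sum_add_distrib, ← Finset.mul_sum] using hsum

lemma energy_succ_le (n : ℕ) (hl : l ≠ 0) {δ : ℝ} (hδ : 0 < δ) (hk : k ≤ 1) :
    ∃ C ≥ 0, ∀ u : EuclideanSpace ℝ (Fin n) → ℝ, ContDiff ℝ ∞ u → ∀ ρ > 0,
      energy l u ρ (k + 1) ≤ δ * energy l u ρ (k + 2) + C * energy l u ρ k := by
  obtain ⟨C, hC0, hC⟩ := sq_mul_integral_derivSq_succ_le n (s := l + k) (by omega) hδ k
  refine ⟨C, hC0, fun u hu ρ hρ => ?_⟩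
  have h := mul_le_mul_of_nonneg_left (hC u hu ρ hρ) (pow_nonneg hρ.le (2 * (1 - k)))
  rw [← mul_assoc, ← pow_add] at h
  simp only [energy_eq]
  rw [show 2 * (3 - (k + 1)) = 2 * (1 - k) + 2 by omega,
    show 2 * (3 - (k + 2)) = 2 * (1 - k) by omega, show 2 * (3 - k) = 2 * (1 - k) + 4 by omega]
  refine h.trans_eq ?_
  rw [pow_add ρ _ 4]
  ring_nf

lemma sum_energy_le (n : ℕ) (hl : l ≠ 0) (hε : 0 < ε) :
    ∃ C ≥ 0, ∀ u : EuclideanSpace ℝ (Fin n) → ℝ, ContDiff ℝ ∞ u → ∀ ρ > 0,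
      ∑ k ∈ Finset.range 3, energy l u ρ k ≤ ε * energy l u ρ 3 + C * energy l u ρ 0 := by
  obtain ⟨C₂, hC₂0, h₂⟩ := energy_succ_le n hl (k := 1) (δ := ε / 4) (by positivity) le_rfl
  obtain ⟨C₁, hC₁0, h₁⟩ := energy_succ_le n hl (k := 0) (δ := 1 / (2 * C₂ + 1)) (by positivity)
    zero_le_one
  refine ⟨1 + C₁ + 4 * (C₂ * C₁), by positivity, fun u hu ρ hρ => ?_⟩
  have he := fun k => energy_nonneg l u ρ k
  have hδ_half : C₂ * (1 / (2 * C₂ + 1)) ≤ 1 / 2 := by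
    rw [mul_one_div, div_le_div_iff₀ (by positivity) two_pos]
    linarith
  have hδ_one : 1 / (2 * C₂ + 1) ≤ 1 := by
    rw [div_le_one (by positivity)]
    linarith
  have he₁ := h₁ u hu ρ hρ
  have hsecond : energy l u ρ 2 ≤ ε / 2 * energy l u ρ 3 + 2 * (C₂ * C₁) * energy l u ρ 0 := by
    have := mul_le_mul_of_nonneg_left he₁ hC₂0
    have := mul_le_mul_of_nonneg_right hδ_half (he 2)
    have := h₂ u hu ρ hρ
    linarith
  have hfirst : energy l u ρ 1 ≤ energy l u ρ 2 + C₁ * energy l u ρ 0 :=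
    he₁.trans (by gcongr; exact mul_le_of_le_one_left (he 2) hδ_one)
  rw [Finset.sum_range_succ, Finset.sum_range_succ, Finset.sum_range_one]
  linarith

lemma mul_div_add_one_le {a b : ℝ} (ha : 0 ≤ a) (hb : 0 ≤ b) : a * (b / (a + 1)) ≤ b := by
  rw [mul_div_assoc', div_le_iff₀ (by positivity)]
  linarith

lemma mul_sum_energy_le (n : ℕ) (hl : l ≠ 0) {K : ℝ} (hK : 0 ≤ K) (hε : 0 < ε) :
    ∃ C ≥ 0, ∀ u : EuclideanSpace ℝ (Fin n) → ℝ, ContDiff ℝ ∞ u → ∀ ρ > 0,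
      K * ∑ k ∈ Finset.range 3, energy l u ρ k ≤ ε * energy l u ρ 3 + C * energy l u ρ 0 := by
  obtain ⟨C, hC0, hC⟩ := sum_energy_le n hl (ε := ε / (K + 1)) (by positivity)
  refine ⟨K * C, by positivity, fun u hu ρ hρ => ?_⟩
  calc K * ∑ k ∈ Finset.range 3, energy l u ρ k
      ≤ K * (ε / (K + 1) * energy l u ρ 3 + C * energy l u ρ 0) := by
        gcongr
        exact hC u hu ρ hρ
    _ = K * (ε / (K + 1)) * energy l u ρ 3 + K * C * energy l u ρ 0 := by ring
    _ ≤ ε * energy l u ρ 3 + K * C * energy l u ρ 0 := by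
        gcongr
        · exact energy_nonneg l u ρ 3
        · exact mul_div_add_one_le hK hε.le

lemma sq_sum_scaledNorm_le (l : ℕ) (u : EuclideanSpace ℝ (Fin n) → ℝ) (ρ : ℝ)
    (x : EuclideanSpace ℝ (Fin n)) :
    (∑ k ∈ Finset.range 3, scaledNorm l u ρ k x) ^ 2 ≤
      3 * ∑ k ∈ Finset.range 3, scaledNorm l u ρ k x ^ 2 := by
  simpa using sq_sum_le_card_mul_sum_sq (s := Finset.range 3) (f := fun k => scaledNorm l u ρ k x)

lemma integrable_sum_scaledNorm_sq (hu : ContDiff ℝ ∞ u) (hρ : 0 < ρ) (hl : l ≠ 0) :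
    Integrable fun x => ∑ k ∈ Finset.range 3, scaledNorm l u ρ k x ^ 2 :=
  integrable_finsetSum _ fun k _ => integrable_scaledNorm_sq hu hρ hl k

lemma integral_add_sum_scaledNorm_sq (hu : ContDiff ℝ ∞ u) (hρ : 0 < ρ) (hl : l ≠ 0) (a b : ℝ) :
    ∫ x, (a * scaledNorm l u ρ 3 x ^ 2 + b * ∑ k ∈ Finset.range 3, scaledNorm l u ρ k x ^ 2) =
      a * energy l u ρ 3 + b * ∑ k ∈ Finset.range 3, energy l u ρ k := by
  rw [integral_add ((integrable_scaledNorm_sq hu hρ hl 3).const_mul a)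
    ((integrable_sum_scaledNorm_sq hu hρ hl).const_mul b), integral_const_mul, integral_const_mul,
    integral_finsetSum _ fun k _ => integrable_scaledNorm_sq hu hρ hl k]
  rfl

lemma integrable_add_sum_scaledNorm_sq (hu : ContDiff ℝ ∞ u) (hρ : 0 < ρ) (hl : l ≠ 0) (a b : ℝ) :
    Integrable fun x =>
      a * scaledNorm l u ρ 3 x ^ 2 + b * ∑ k ∈ Finset.range 3, scaledNorm l u ρ k x ^ 2 :=
  ((integrable_scaledNorm_sq hu hρ hl 3).const_mul a).add
    ((integrable_sum_scaledNorm_sq hu hρ hl).const_mul b)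

lemma derivSq_three_mul_cut_pow_le (n : ℕ) (hl : l ≠ 0) (hε : 0 < ε) :
    ∃ K ≥ 0, ∀ u : EuclideanSpace ℝ (Fin n) → ℝ, ContDiff ℝ ∞ u → ∀ ρ > 0, ∀ x,
      derivSq 3 (u * cut ρ ^ (l + 3)) x ≤ (1 + ε) * scaledNorm l u ρ 3 x ^ 2 +
        K * ∑ k ∈ Finset.range 3, scaledNorm l u ρ k x ^ 2 := by
  obtain ⟨M, -, hM⟩ := commutatorBound_cut_pow_le n hl
  refine ⟨(1 + ε⁻¹) * (n ^ 3 * (M ^ 2 * 3)), by positivity, fun u hu ρ hρ x => ?_⟩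
  have hcomm : commutatorBound u (cut ρ ^ (l + 3)) x ^ 2 ≤
      M ^ 2 * (3 * ∑ k ∈ Finset.range 3, scaledNorm l u ρ k x ^ 2) := by
    calc commutatorBound u (cut ρ ^ (l + 3)) x ^ 2
        ≤ (M * ∑ k ∈ Finset.range 3, scaledNorm l u ρ k x) ^ 2 :=
          pow_le_pow_left₀ (commutatorBound_nonneg _ _ x) (hM ρ hρ u x) 2
      _ = M ^ 2 * (∑ k ∈ Finset.range 3, scaledNorm l u ρ k x) ^ 2 := mul_pow _ _ 2
      _ ≤ _ := mul_le_mul_of_nonneg_left (sq_sum_scaledNorm_le l u ρ x) (sq_nonneg M)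
  calc derivSq 3 (u * cut ρ ^ (l + 3)) x
      ≤ (1 + ε) * (derivSq 3 u x * (cut ρ x ^ (l + 3)) ^ 2) +
          (1 + ε⁻¹) * (n ^ 3 * commutatorBound u (cut ρ ^ (l + 3)) x ^ 2) :=
        derivSq_three_mul_le hu (contDiff_cut_pow ρ (l + 3)) hε x
    _ ≤ (1 + ε) * (derivSq 3 u x * (cut ρ x ^ (l + 3)) ^ 2) + (1 + ε⁻¹) *
          (n ^ 3 * (M ^ 2 * (3 * ∑ k ∈ Finset.range 3, scaledNorm l u ρ k x ^ 2))) := by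
        gcongr
    _ = _ := by
        rw [scaledNorm_sq]
        ring

lemma integral_derivSq_three_mul_cut_pow_le (n : ℕ) (hl : l ≠ 0) (hε : 0 < ε) :
    ∃ C ≥ 0, ∀ u : EuclideanSpace ℝ (Fin n) → ℝ, ContDiff ℝ ∞ u → ∀ ρ > 0,
      ∫ x, derivSq 3 (u * cut ρ ^ (l + 3)) x ≤
        (1 + ε) * energy l u ρ 3 + C * energy l u ρ 0 := by
  obtain ⟨K, hK0, hK⟩ := derivSq_three_mul_cut_pow_le n hl (half_pos hε)
  obtain ⟨C, hC0, hC⟩ := mul_sum_energy_le n hl hK0 (half_pos hε)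
  refine ⟨C, hC0, fun u hu ρ hρ => ?_⟩
  have hsmooth := smooth_mul hu (contDiff_cut_pow ρ (l + 3))
  have hmono := integral_mono (integrable_derivInner 3 hsmooth hsmooth
    (hasCompactSupport_cut_pow hρ (by omega)).mul_left)
    (integrable_add_sum_scaledNorm_sq hu hρ hl _ _) (hK u hu ρ hρ)
  rw [integral_add_sum_scaledNorm_sq hu hρ hl] at hmono
  have := hC u hu ρ hρ
  unfold derivSq
  linarith

lemma mul_mul_le_add_sq (hε : 0 < ε) (L a b : ℝ) :
    L * (a * b) ≤ ε * a ^ 2 + L ^ 2 / (4 * ε) * b ^ 2 := by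
  have h : ε * a ^ 2 + L ^ 2 / (4 * ε) * b ^ 2 - L * (a * b) =
      (2 * ε * a - L * b) ^ 2 / (4 * ε) := by
    field_simp
    ring
  exact sub_nonneg.1 (h ▸ by positivity)

lemma derivNorm_three_mul_sum_scaledNorm (l : ℕ) (u : EuclideanSpace ℝ (Fin n) → ℝ) (ρ : ℝ)
    (x : EuclideanSpace ℝ (Fin n)) :
    derivNorm 3 u x * ∑ k ∈ Finset.range 3, scaledNorm (2 * l + 3) u ρ k x =
      scaledNorm l u ρ 3 x * ∑ k ∈ Finset.range 3, scaledNorm l u ρ k x := by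
  simp only [Finset.mul_sum, scaledNorm]
  exact Finset.sum_congr rfl fun k _ => by ring

lemma abs_derivInner_three_mul_cut_pow_sub_le (n : ℕ) (l : ℕ) (hε : 0 < ε) :
    ∃ K ≥ 0, ∀ u : EuclideanSpace ℝ (Fin n) → ℝ, ContDiff ℝ ∞ u → ∀ ρ > 0, ∀ x,
      |derivInner 3 u (u * cut ρ ^ (2 * l + 6)) x - scaledNorm l u ρ 3 x ^ 2| ≤
        ε * scaledNorm l u ρ 3 x ^ 2 +
          K * ∑ k ∈ Finset.range 3, scaledNorm l u ρ k x ^ 2 := by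
  obtain ⟨M, -, hM⟩ := commutatorBound_cut_pow_le n (a := 2 * l + 3) (by omega)
  set L := (n : ℝ) ^ 3 * M with hL
  refine ⟨L ^ 2 / (4 * ε) * 3, by positivity, fun u hu ρ hρ x => ?_⟩
  set T := ∑ k ∈ Finset.range 3, scaledNorm l u ρ k x
  calc |derivInner 3 u (u * cut ρ ^ (2 * l + 6)) x - scaledNorm l u ρ 3 x ^ 2|
      = |derivInner 3 u (u * cut ρ ^ (2 * l + 6)) x -
          derivInner 3 u u x * (cut ρ ^ (2 * l + 6)) x| := by
        simp only [scaledNorm_sq, derivSq, Pi.pow_apply, mul_add, Nat.sub_self, mul_zero, pow_zero,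
          one_mul, Nat.reduceMul]
    _ ≤ n ^ 3 * (derivNorm 3 u x * commutatorBound u (cut ρ ^ (2 * l + 3 + 3)) x) :=
        abs_derivInner_three_mul_sub_le hu (contDiff_cut_pow ρ (2 * l + 6)) u x
    _ ≤ n ^ 3 * (derivNorm 3 u x *
          (M * ∑ k ∈ Finset.range 3, scaledNorm (2 * l + 3) u ρ k x)) := by
        gcongr
        · exact derivNorm_nonneg 3 u x
        · exact hM ρ hρ u x
    _ = L * (scaledNorm l u ρ 3 x * T) := by
        rw [← derivNorm_three_mul_sum_scaledNorm, hL]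
        ring
    _ ≤ ε * scaledNorm l u ρ 3 x ^ 2 + L ^ 2 / (4 * ε) * T ^ 2 :=
        mul_mul_le_add_sq hε L _ T
    _ ≤ _ := by
        rw [mul_assoc _ (3 : ℝ)]
        gcongr
        exact sq_sum_scaledNorm_le l u ρ x

lemma abs_integral_derivInner_three_sub_energy_le (n : ℕ) (hl : l ≠ 0) (hε : 0 < ε) :
    ∃ C ≥ 0, ∀ u : EuclideanSpace ℝ (Fin n) → ℝ, ContDiff ℝ ∞ u → ∀ ρ > 0,
      |(∫ x, derivInner 3 u (u * cut ρ ^ (2 * l + 6)) x) - energy l u ρ 3| ≤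
        ε * energy l u ρ 3 + C * energy l u ρ 0 := by
  obtain ⟨K, hK0, hK⟩ := abs_derivInner_three_mul_cut_pow_sub_le n l (half_pos hε)
  obtain ⟨C, hC0, hC⟩ := mul_sum_energy_le n hl hK0 (half_pos hε)
  refine ⟨C, hC0, fun u hu ρ hρ => ?_⟩
  have hint := integrable_derivInner 3 hu (smooth_mul hu (contDiff_cut_pow ρ (2 * l + 6)))
    (hasCompactSupport_cut_pow hρ (by omega)).mul_left
  have hsub := hint.sub (integrable_scaledNorm_sq hu hρ hl 3)
  have hmono := integral_mono hsub.abs (integrable_add_sum_scaledNorm_sq hu hρ hl _ _)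
    (hK u hu ρ hρ)
  rw [integral_add_sum_scaledNorm_sq hu hρ hl] at hmono
  have := hC u hu ρ hρ
  calc |(∫ x, derivInner 3 u (u * cut ρ ^ (2 * l + 6)) x) - energy l u ρ 3|
      = |∫ x, (derivInner 3 u (u * cut ρ ^ (2 * l + 6)) x - scaledNorm l u ρ 3 x ^ 2)| := by
        rw [integral_sub hint (integrable_scaledNorm_sq hu hρ hl 3), energy]
    _ ≤ _ := abs_integral_le_integral_abs.trans hmono
    _ ≤ _ := by linarith

/-! ### The equation, stability and Young's inequality -/

/-- The triharmonic Lane–Emden equation `(-Δ)³u = |u|ᵖ⁻¹u`, written as `Δ³u = -|u|ᵖ⁻¹u`. -/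
def IsSolution (p : ℝ) (u : EuclideanSpace ℝ (Fin n) → ℝ) : Prop :=
  ∀ x, laplacian (laplacian (laplacian u)) x = -(|u x| ^ (p - 1) * u x)

/-- Stability outside `Θ`: the second variation of the energy is nonnegative on the test functions
supported away from `Θ`. -/
def IsStableOutside (p : ℝ) (u : EuclideanSpace ℝ (Fin n) → ℝ)
    (Θ : Set (EuclideanSpace ℝ (Fin n))) : Prop :=
  ∀ φ : EuclideanSpace ℝ (Fin n) → ℝ, ContDiff ℝ ∞ φ → HasCompactSupport φ → tsupport φ ⊆ Θᶜ →
    p * (∫ x, |u x| ^ (p - 1) * φ x ^ 2) ≤ ∫ x, ‖gradient (laplacian φ) x‖ ^ 2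

/-- The density `|u|ᵖ⁺¹` of the potential energy. -/
def potential (p : ℝ) (u : EuclideanSpace ℝ (Fin n) → ℝ) (x : EuclideanSpace ℝ (Fin n)) : ℝ :=
  |u x| ^ (p + 1)

lemma potential_nonneg (p : ℝ) (u : EuclideanSpace ℝ (Fin n) → ℝ)
    (x : EuclideanSpace ℝ (Fin n)) : 0 ≤ potential p u x :=
  Real.rpow_nonneg (abs_nonneg _) _

lemma continuous_potential (hp : 1 < p) (hu : Continuous u) : Continuous (potential p u) :=
  hu.abs.rpow_const fun _ => Or.inr (by linarith)

lemma rpow_add_one_eq_mul_sq {t : ℝ} (hp : 1 < p) (ht : 0 ≤ t) :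
    t ^ (p + 1) = t ^ (p - 1) * t ^ 2 := by
  rw [← Real.rpow_add_natCast' ht (by push_cast; linarith)]
  congr 1
  push_cast
  ring

lemma potential_eq (hp : 1 < p) (u : EuclideanSpace ℝ (Fin n) → ℝ)
    (x : EuclideanSpace ℝ (Fin n)) : potential p u x = |u x| ^ (p - 1) * u x ^ 2 := by
  rw [potential, rpow_add_one_eq_mul_sq hp (abs_nonneg _), sq_abs]

lemma IsSolution.integral_mul_eq (h : IsSolution p u) (hu : ContDiff ℝ ∞ u)
    (hg : ContDiff ℝ ∞ g) (hc : HasCompactSupport g) :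
    ∫ x, |u x| ^ (p - 1) * u x * g x = ∫ x, derivInner 3 u g x := by
  have hibp : ∫ x, laplacian (laplacian (laplacian u)) x * g x =
    (-1) ^ 3 * ∫ x, derivInner 3 u g x := integral_iterate_laplacian_mul 3 hu hg hc
  simp only [h _, neg_mul, integral_neg] at hibp
  linarith

lemma integral_le_add_setIntegral {F G : EuclideanSpace ℝ (Fin n) → ℝ}
    {S : Set (EuclideanSpace ℝ (Fin n))} (hS : MeasurableSet S) (hF : Integrable F)
    (hG : Integrable G) (hG0 : ∀ x, 0 ≤ G x) (h : ∀ x ∉ S, F x ≤ G x) :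
    ∫ x, F x ≤ (∫ x, G x) + ∫ x in S, F x := by
  rw [← integral_add_compl hS hF, add_comm]
  gcongr
  exact (setIntegral_mono_on hF.integrableOn hG.integrableOn hS.compl h).trans
    (setIntegral_le_integral hG (Eventually.of_forall hG0))

lemma exists_contDiff_eq_one_of_le_norm {Θ : Set (EuclideanSpace ℝ (Fin n))}
    (hΘ : Bornology.IsBounded Θ) :
    ∃ χ : EuclideanSpace ℝ (Fin n) → ℝ, ContDiff ℝ ∞ χ ∧ tsupport χ ⊆ Θᶜ ∧
      ∃ R > 0, ∀ x, R ≤ ‖x‖ → χ x = 1 := by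
  obtain ⟨r, hr, hΘr⟩ := hΘ.exists_pos_norm_lt
  refine ⟨1 - cut r⁻¹, contDiff_const.sub (contDiff_cut _), fun x hx hxΘ => ?_, 2 * r,
    by positivity, fun x hx => ?_⟩
  · refine notMem_tsupport_iff_eventuallyEq.2 ?_ hx
    filter_upwards [cut_pow_eventuallyEq_one (inv_nonneg.2 hr.le) 1
      ((inv_mul_lt_one₀ hr).2 (hΘr x hxΘ))] with y hy
    simp_all
  · simp [cut_eq_zero (inv_nonneg.2 hr.le) ((le_inv_mul_iff₀ hr).2 ((mul_comm r 2).trans_le hx))]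

lemma integral_potential_mul_sq_le {R : ℝ} {ζ : EuclideanSpace ℝ (Fin n) → ℝ} (hp : 1 < p)
    (hu : Continuous u) (hχ : Continuous χ) (hχR : ∀ x, R ≤ ‖x‖ → χ x = 1) (hζ : Continuous ζ)
    (hζc : HasCompactSupport ζ) (hζR : ∀ x, ‖x‖ ≤ R → ζ x = 1) :
    ∫ x, potential p u x * ζ x ^ 2 ≤ (∫ x, |u x| ^ (p - 1) * (u * χ * ζ) x ^ 2) +
      ∫ x in Metric.closedBall 0 R, potential p u x := by
  have hB := (Metric.isClosed_closedBall (x := (0 : EuclideanSpace ℝ (Fin n)))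
    (ε := R)).measurableSet
  have hpow : Continuous fun x => |u x| ^ (p - 1) := hu.abs.rpow_const fun _ => Or.inr (by linarith)
  have hsq {w : EuclideanSpace ℝ (Fin n) → ℝ} (hw : HasCompactSupport w) :
      HasCompactSupport fun x => w x ^ 2 :=
    hw.comp_left (g := fun t => t ^ 2) (zero_pow two_ne_zero)
  have hB_eq : ∫ x in Metric.closedBall 0 R, potential p u x * ζ x ^ 2 =
      ∫ x in Metric.closedBall 0 R, potential p u x := setIntegral_congr_fun hB fun x hx => by
    simp [hζR x (mem_closedBall_zero_iff.1 hx)]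
  rw [← hB_eq]
  refine integral_le_add_setIntegral hB
    (((continuous_potential hp hu).mul (hζ.pow 2)).integrable_of_hasCompactSupport
      (hsq hζc).mul_left)
    ((hpow.mul (((hu.mul hχ).mul hζ).pow 2)).integrable_of_hasCompactSupport
      (hsq hζc.mul_left).mul_left) (fun x => by positivity) fun x hx => le_of_eq ?_
  rw [mem_closedBall_zero_iff, not_le] at hx
  rw [potential_eq hp, Pi.mul_apply, Pi.mul_apply, hχR x hx.le]
  ring

lemma integral_derivSq_mul_mul_le {R : ℝ} {ζ : EuclideanSpace ℝ (Fin n) → ℝ} (k : ℕ)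
    (hu : ContDiff ℝ ∞ u) (hχ : ContDiff ℝ ∞ χ) (hχR : ∀ x, R ≤ ‖x‖ → χ x = 1)
    (hζ : ContDiff ℝ ∞ ζ) (hζc : HasCompactSupport ζ) (hζR : ∀ x, ‖x‖ < R + 1 → ζ x = 1) :
    ∫ x, derivSq k (u * χ * ζ) x ≤ (∫ x, derivSq k (u * ζ) x) +
      ∫ x in Metric.closedBall 0 R, derivSq k (u * χ) x := by
  have hB := (Metric.isClosed_closedBall (x := (0 : EuclideanSpace ℝ (Fin n)))
    (ε := R)).measurableSet
  have huζ := smooth_mul hu hζ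
  have huχζ := smooth_mul (smooth_mul hu hχ) hζ
  have hB_eq : ∫ x in Metric.closedBall 0 R, derivSq k (u * χ * ζ) x =
      ∫ x in Metric.closedBall 0 R, derivSq k (u * χ) x := setIntegral_congr_fun hB fun x hx => by
    have hx' : ‖x‖ < R + 1 := by linarith [mem_closedBall_zero_iff.1 hx]
    refine derivSq_congr k ?_
    filter_upwards [continuous_norm.continuousAt.eventually_lt_const hx'] with y hy
    rw [Pi.mul_apply, hζR y hy, mul_one]
  rw [← hB_eq]
  refine integral_le_add_setIntegral hB (integrable_derivInner k huχζ huχζ hζc.mul_left)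
    (integrable_derivInner k huζ huζ hζc.mul_left) (derivSq_nonneg k _) fun x hx => ?_
  rw [mem_closedBall_zero_iff, not_le] at hx
  refine (derivSq_congr k ?_).le
  filter_upwards [continuous_norm.continuousAt.eventually_const_lt hx] with y hy
  rw [Pi.mul_apply, Pi.mul_apply, Pi.mul_apply, hχR y hy.le, mul_one]

lemma IsStableOutside.exists_integral_le (hp : 1 < p) (hu : ContDiff ℝ ∞ u)
    {Θ : Set (EuclideanSpace ℝ (Fin n))} (hΘ : Bornology.IsBounded Θ)
    (h : IsStableOutside p u Θ) :
    ∃ R > 0, ∃ K, ∀ ζ : EuclideanSpace ℝ (Fin n) → ℝ, ContDiff ℝ ∞ ζ → HasCompactSupport ζ →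
      (∀ x, ‖x‖ < R → ζ x = 1) →
      p * ∫ x, potential p u x * ζ x ^ 2 ≤ (∫ x, derivSq 3 (u * ζ) x) + K := by
  obtain ⟨χ, hχ, hχΘ, R, hR, hχR⟩ := exists_contDiff_eq_one_of_le_norm hΘ
  refine ⟨R + 1, by positivity, p * (∫ x in Metric.closedBall 0 R, potential p u x) +
    ∫ x in Metric.closedBall 0 R, derivSq 3 (u * χ) x, fun ζ hζ hζc hζ1 => ?_⟩
  have hφ : ContDiff ℝ ∞ (u * χ * ζ) := (smooth_mul hu hχ).mul hζ
  have hφc : HasCompactSupport (u * χ * ζ) := hζc.mul_left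
  have hstable := h _ hφ hφc ((tsupport_mul_subset_left.trans tsupport_mul_subset_right).trans hχΘ)
  rw [integral_norm_gradient_laplacian_sq hφ hφc] at hstable
  have hpot := integral_potential_mul_sq_le hp hu.continuous hχ.continuous hχR hζ.continuous hζc
    fun x hx => hζ1 x (by linarith)
  have hder := integral_derivSq_mul_mul_le 3 hu hχ hχR hζ hζc hζ1
  have := mul_le_mul_of_nonneg_left hpot (zero_le_one.trans hp.le)
  linarith

lemma sq_mul_pow_le_rpow {t : ℝ} (hp : 1 < p) (hl : l ≠ 0) (hlp : 12 / (p - 1) ≤ 2 * l)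
    (ht : 0 ≤ t) (hc : 0 ≤ c) (hc1 : c ≤ 1) :
    t ^ 2 * c ^ (2 * l) ≤ (t ^ (p - 1) * c ^ 6) ^ (2 / (p - 1)) := by
  have hp' : 0 < p - 1 := sub_pos.2 hp
  rw [Real.mul_rpow (by positivity) (by positivity), ← Real.rpow_mul ht,
    mul_div_cancel₀ _ hp'.ne', Real.rpow_two, ← Real.rpow_natCast c 6, ← Real.rpow_mul hc]
  gcongr
  rcases hc.eq_or_lt with rfl | hc
  · rw [zero_pow (by omega)]
    exact Real.rpow_nonneg le_rfl _
  · rw [← Real.rpow_natCast]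
    refine Real.rpow_le_rpow_of_exponent_ge hc hc1 ?_
    push_cast
    convert hlp using 1
    ring

lemma mul_sq_mul_pow_le {a t : ℝ} (hp : 1 < p) (hl : l ≠ 0) (hlp : 12 / (p - 1) ≤ 2 * l)
    (hε : 0 < ε) (ha : 0 ≤ a) (ht : 0 ≤ t) (hc : 0 ≤ c) (hc1 : c ≤ 1) :
    a * (t ^ 2 * c ^ (2 * l)) ≤
      ε * (t ^ (p + 1) * c ^ (2 * l + 6)) + a * (a / ε) ^ (2 / (p - 1)) := by
  rcases le_total a (ε * (t ^ (p - 1) * c ^ 6)) with h | h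
  · calc a * (t ^ 2 * c ^ (2 * l)) ≤ ε * (t ^ (p - 1) * c ^ 6) * (t ^ 2 * c ^ (2 * l)) := by gcongr
      _ = ε * (t ^ (p + 1) * c ^ (2 * l + 6)) := by
        rw [rpow_add_one_eq_mul_sq hp ht]
        ring
      _ ≤ _ := le_add_of_nonneg_right (by positivity)
  · calc a * (t ^ 2 * c ^ (2 * l)) ≤ a * (t ^ (p - 1) * c ^ 6) ^ (2 / (p - 1)) := by
          gcongr
          exact sq_mul_pow_le_rpow hp hl hlp ht hc hc1
      _ ≤ a * (a / ε) ^ (2 / (p - 1)) := by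
          have := sub_pos.2 hp
          gcongr
          rwa [le_div_iff₀' hε]
      _ ≤ _ := le_add_of_nonneg_left (by positivity)

lemma young_error_mul_inv_pow (n : ℕ) (hε : 0 < ε) (hρ : 0 < ρ) :
    ρ ^ 6 * (ρ ^ 6 / ε) ^ (2 / (p - 1)) * ρ⁻¹ ^ n =
      (1 / ε) ^ (2 / (p - 1)) * ρ ^ (6 + 12 / (p - 1) - n) := by
  rw [Real.rpow_sub hρ, Real.rpow_add hρ, Real.rpow_natCast, div_eq_mul_one_div (ρ ^ 6),
    Real.mul_rpow (by positivity) (by positivity), ← Real.rpow_natCast ρ 6, ← Real.rpow_mul hρ.le,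
    inv_pow]
  ring_nf

/-- The potential energy, localized by the power of the cut-off used in `energy l u ρ 3`. -/
def potentialEnergy (l : ℕ) (p : ℝ) (u : EuclideanSpace ℝ (Fin n) → ℝ) (ρ : ℝ) : ℝ :=
  ∫ x, potential p u x * cut ρ x ^ (2 * l + 6)

lemma integrable_potential_mul_cut_pow (hp : 1 < p) (hu : Continuous u) (hρ : 0 < ρ) (l : ℕ) :
    Integrable fun x => potential p u x * cut ρ x ^ (2 * l + 6) :=
  integrable_mul_cut_pow (continuous_potential hp hu) hρ (by omega)

lemma potentialEnergy_nonneg (l : ℕ) (p : ℝ) (u : EuclideanSpace ℝ (Fin n) → ℝ) (ρ : ℝ) :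
    0 ≤ potentialEnergy l p u ρ :=
  integral_nonneg fun x => mul_nonneg (potential_nonneg p u x) (cut_pow_nonneg ρ _ x)

lemma energy_zero_le (n : ℕ) (hp : 1 < p) (hl : l ≠ 0) (hlp : 12 / (p - 1) ≤ 2 * l) (hε : 0 < ε) :
    ∃ C ≥ 0, ∀ u : EuclideanSpace ℝ (Fin n) → ℝ, ContDiff ℝ ∞ u → ∀ ρ > 0,
      energy l u ρ 0 ≤ ε * potentialEnergy l p u ρ + C * ρ ^ (6 + 12 / (p - 1) - n) := by
  set V := volume.real (Metric.closedBall (0 : EuclideanSpace ℝ (Fin n)) 2) with hV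
  refine ⟨(1 / ε) ^ (2 / (p - 1)) * V, by positivity, fun u hu ρ hρ => ?_⟩
  set B := Metric.closedBall (0 : EuclideanSpace ℝ (Fin n)) (ρ⁻¹ * 2)
  set a := ρ ^ 6 * (ρ ^ 6 / ε) ^ (2 / (p - 1)) with ha
  have hvol : volume.real B = ρ⁻¹ ^ n * V := by
    rw [measureReal_def, Measure.addHaar_closedBall_mul _ _ (inv_nonneg.2 hρ.le) zero_le_two,
      ENNReal.toReal_mul, ENNReal.toReal_ofReal (by positivity), finrank_euclideanSpace_fin, hV,
      measureReal_def]
  have hsupp : ∀ x ∉ B, scaledNorm l u ρ 0 x ^ 2 = 0 := fun x hx => by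
    rw [mem_closedBall_zero_iff, not_le, inv_mul_lt_iff₀ hρ] at hx
    simp [scaledNorm, cut_eq_zero hρ.le hx.le, hl]
  have hG := (integrable_potential_mul_cut_pow hp hu.continuous hρ l).const_mul ε
  have ha_int : IntegrableOn (fun _ => a) B := integrableOn_const (by
    exact (isCompact_closedBall _ _).measure_lt_top.ne)
  calc energy l u ρ 0 = ∫ x in B, scaledNorm l u ρ 0 x ^ 2 := by
        rw [setIntegral_eq_integral_of_forall_compl_eq_zero hsupp, energy]
    _ ≤ ∫ x in B, (ε * (potential p u x * cut ρ x ^ (2 * l + 6)) + a) :=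
        integral_mono (integrable_scaledNorm_sq hu hρ hl 0).integrableOn
          (hG.integrableOn.add ha_int) fun x => by
            simpa [scaledNorm_sq, derivSq_zero_apply, potential, sq_abs] using mul_sq_mul_pow_le hp
              hl hlp hε (pow_nonneg hρ.le 6) (abs_nonneg (u x)) (cut_nonneg ρ x) (cut_le_one ρ x)
    _ = (∫ x in B, ε * (potential p u x * cut ρ x ^ (2 * l + 6))) + a * (ρ⁻¹ ^ n * V) := by
        rw [integral_add hG.integrableOn ha_int, setIntegral_const, hvol, smul_eq_mul, mul_comm a]
    _ ≤ ε * potentialEnergy l p u ρ + a * (ρ⁻¹ ^ n * V) := by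
        rw [potentialEnergy, ← integral_const_mul]
        gcongr ?_ + _
        exact setIntegral_le_integral hG (Eventually.of_forall fun x => mul_nonneg hε.le
          (mul_nonneg (potential_nonneg p u x) (cut_pow_nonneg ρ _ x)))
    _ = _ := by
        rw [ha, ← mul_assoc, young_error_mul_inv_pow n hε hρ]
        ring

/-! ### Finite energy -/

lemma IsSolution.abs_potentialEnergy_sub_energy_le (h : IsSolution p u) (hp : 1 < p)
    (hu : ContDiff ℝ ∞ u) (hl : l ≠ 0) (hε : 0 < ε) :
    ∃ C ≥ 0, ∀ ρ > 0,
      |potentialEnergy l p u ρ - energy l u ρ 3| ≤ ε * energy l u ρ 3 + C * energy l u ρ 0 := by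
  obtain ⟨C, hC, hle⟩ := abs_integral_derivInner_three_sub_energy_le n hl hε
  refine ⟨C, hC, fun ρ hρ => ?_⟩
  have hweak : potentialEnergy l p u ρ = ∫ x, derivInner 3 u (u * cut ρ ^ (2 * l + 6)) x := by
    rw [← h.integral_mul_eq hu (smooth_mul hu (contDiff_cut_pow ρ _))
      (hasCompactSupport_cut_pow hρ (by omega)).mul_left]
    refine integral_congr_ae (Eventually.of_forall fun x => ?_)
    simp only [potential_eq hp, Pi.mul_apply, Pi.pow_apply]
    ring
  rw [hweak]
  exact hle u hu ρ hρ

lemma IsStableOutside.exists_mul_potentialEnergy_le {Θ : Set (EuclideanSpace ℝ (Fin n))}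
    (h : IsStableOutside p u Θ) (hΘ : Bornology.IsBounded Θ) (hp : 1 < p) (hu : ContDiff ℝ ∞ u)
    (hl : l ≠ 0) (hε : 0 < ε) :
    ∃ C ≥ 0, ∃ K, ∀ᶠ ρ in 𝓝[>] (0 : ℝ),
      p * potentialEnergy l p u ρ ≤ (1 + ε) * energy l u ρ 3 + C * energy l u ρ 0 + K := by
  obtain ⟨R, hR, K, hK⟩ := h.exists_integral_le hp hu hΘ
  obtain ⟨C, hC, hle⟩ := integral_derivSq_three_mul_cut_pow_le n hl hε
  refine ⟨C, hC, K, ?_⟩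
  filter_upwards [Ioo_mem_nhdsGT (inv_pos.2 hR)] with ρ ⟨hρ, hρR⟩
  have hone (x : EuclideanSpace ℝ (Fin n)) (hx : ‖x‖ < R) : (cut ρ ^ (l + 3)) x = 1 := by
    rw [Pi.pow_apply, cut_eq_one hρ.le, one_pow]
    calc ρ * ‖x‖ ≤ R⁻¹ * R := by gcongr
      _ = 1 := inv_mul_cancel₀ hR.ne'
  have hpot : potentialEnergy l p u ρ = ∫ x, potential p u x * (cut ρ ^ (l + 3)) x ^ 2 := by
    simp only [potentialEnergy, Pi.pow_apply, ← pow_mul, add_mul, mul_comm l 2]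
  rw [hpot]
  exact (hK _ (contDiff_cut_pow ρ _) (hasCompactSupport_cut_pow hρ (by omega)) hone).trans
    (by gcongr; exact hle u hu ρ hρ)

lemma exists_potentialEnergy_le_energy_zero (hp : 1 < p) (hl : l ≠ 0) (hu : ContDiff ℝ ∞ u)
    (h : IsSolution p u) {Θ : Set (EuclideanSpace ℝ (Fin n))} (hΘ : Bornology.IsBounded Θ)
    (hstab : IsStableOutside p u Θ) :
    ∃ C ≥ 0, ∃ K, ∀ᶠ ρ in 𝓝[>] (0 : ℝ), potentialEnergy l p u ρ ≤ C * energy l u ρ 0 + K := by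
  have hp' : 0 < p - 1 := sub_pos.2 hp
  have hp3 : 0 < p + 3 := by linarith
  -- `ε` is chosen such that `(1 + ε) / (1 - ε) = (p + 1) / 2 < p`.
  set ε := (p - 1) / (p + 3) with hε
  have hε0 : 0 < ε := div_pos hp' hp3
  have hε_sub : 1 + ε = (p + 1) / 2 * (1 - ε) := by
    rw [hε]
    field_simp
    ring
  obtain ⟨C₁, hC₁, hsol⟩ := h.abs_potentialEnergy_sub_energy_le hp hu hl hε0
  obtain ⟨C₂, hC₂, K, hstable⟩ := hstab.exists_mul_potentialEnergy_le hΘ hp hu hl hε0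
  refine ⟨2 / (p - 1) * ((p + 1) / 2 * C₁ + C₂), by positivity, 2 / (p - 1) * K, ?_⟩
  filter_upwards [hstable, self_mem_nhdsWithin] with ρ hstable hρ
  have hE : (1 - ε) * energy l u ρ 3 ≤ potentialEnergy l p u ρ + C₁ * energy l u ρ 0 := by
    linarith [(abs_le.1 (hsol ρ hρ)).1]
  have hE' := mul_le_mul_of_nonneg_left hE (by positivity : 0 ≤ (p + 1) / 2)
  rw [hε_sub] at hstable
  rw [mul_assoc, ← mul_add, div_mul_eq_mul_div, le_div_iff₀ hp']
  linarith

lemma tendsto_rpow_nhdsGT_zero {d : ℝ} (hd : 0 < d) :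
    Tendsto (fun ρ : ℝ => ρ ^ d) (𝓝[>] 0) (𝓝 0) := by
  simpa [Real.zero_rpow hd.ne'] using
    (Real.continuousAt_rpow_const 0 d (Or.inr hd.le)).tendsto.mono_left nhdsWithin_le_nhds

lemma eventually_potentialEnergy_le (hp : 1 < p) (hd : 0 < 6 + 12 / (p - 1) - n) (hl : l ≠ 0)
    (hlp : 12 / (p - 1) ≤ 2 * l) (hu : ContDiff ℝ ∞ u) (h : IsSolution p u)
    {Θ : Set (EuclideanSpace ℝ (Fin n))} (hΘ : Bornology.IsBounded Θ)
    (hstab : IsStableOutside p u Θ) :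
    ∃ B, ∀ᶠ ρ in 𝓝[>] (0 : ℝ), potentialEnergy l p u ρ ≤ B := by
  obtain ⟨C, hC, K, hle⟩ := exists_potentialEnergy_le_energy_zero hp hl hu h hΘ hstab
  obtain ⟨C₀, hC₀, hle₀⟩ := energy_zero_le n hp hl hlp (ε := 1 / 2 / (C + 1)) (by positivity)
  refine ⟨2 * (C * C₀ + K), ?_⟩
  filter_upwards [hle, (tendsto_rpow_nhdsGT_zero hd).eventually_le_const one_pos,
    self_mem_nhdsWithin] with ρ hle hpow hρ
  have habsorb : C * energy l u ρ 0 ≤ 1 / 2 * potentialEnergy l p u ρ + C * C₀ :=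
    calc C * energy l u ρ 0
        ≤ C * (1 / 2 / (C + 1) * potentialEnergy l p u ρ + C₀ * 1) := by
          gcongr
          exact (hle₀ u hu ρ hρ).trans (by gcongr)
      _ = C * (1 / 2 / (C + 1)) * potentialEnergy l p u ρ + C * C₀ := by ring
      _ ≤ _ := by
          gcongr
          exacts [potentialEnergy_nonneg l p u ρ, mul_div_add_one_le hC (by norm_num)]
  linarith

lemma tendsto_zero_of_le_mul_add {ι : Type*} {L : Filter ι} {f g h : ι → ℝ} {B : ℝ}
    (hf : ∀ i, 0 ≤ f i) (hg : Tendsto g L (𝓝 0)) (hh : ∀ᶠ i in L, h i ≤ B)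
    (hle : ∀ ε > 0, ∃ C, ∀ᶠ i in L, f i ≤ ε * h i + C * g i) : Tendsto f L (𝓝 0) := by
  refine tendsto_order.2 ⟨fun a ha => Eventually.of_forall fun i => ha.trans_le (hf i),
    fun a ha => ?_⟩
  have ha' : a / 2 / (|B| + 1) * |B| < a := by
    rw [mul_comm]
    linarith [mul_div_add_one_le (abs_nonneg B) (half_pos ha).le]
  obtain ⟨C, hC⟩ := hle (a / 2 / (|B| + 1)) (by positivity)
  have hsum : Tendsto (fun i => a / 2 / (|B| + 1) * |B| + C * g i) L
      (𝓝 (a / 2 / (|B| + 1) * |B| + C * 0)) := tendsto_const_nhds.add (hg.const_mul C)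
  filter_upwards [hC, hh, hsum.eventually_lt_const (by simpa using ha')] with i hi hBi hlt
  refine hi.trans_lt (lt_of_le_of_lt ?_ hlt)
  gcongr
  exact hBi.trans (le_abs_self B)

lemma tendsto_energy_zero (hp : 1 < p) (hd : 0 < 6 + 12 / (p - 1) - n) (hl : l ≠ 0)
    (hlp : 12 / (p - 1) ≤ 2 * l) (hu : ContDiff ℝ ∞ u) {B : ℝ}
    (hB : ∀ᶠ ρ in 𝓝[>] (0 : ℝ), potentialEnergy l p u ρ ≤ B) :
    Tendsto (fun ρ => energy l u ρ 0) (𝓝[>] 0) (𝓝 0) := by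
  refine tendsto_zero_of_le_mul_add (fun ρ => energy_nonneg l u ρ 0)
    (tendsto_rpow_nhdsGT_zero hd) hB fun ε hε => ?_
  obtain ⟨C, -, hC⟩ := energy_zero_le n hp hl hlp hε
  exact ⟨C, by filter_upwards [self_mem_nhdsWithin] with ρ hρ using hC u hu ρ hρ⟩

lemma IsSolution.eventually_energy_three_le (h : IsSolution p u) (hp : 1 < p) (hl : l ≠ 0)
    (hu : ContDiff ℝ ∞ u) {B : ℝ} (hB : ∀ᶠ ρ in 𝓝[>] (0 : ℝ), potentialEnergy l p u ρ ≤ B)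
    (h₀ : Tendsto (fun ρ => energy l u ρ 0) (𝓝[>] 0) (𝓝 0)) :
    ∃ B', ∀ᶠ ρ in 𝓝[>] (0 : ℝ), energy l u ρ 3 ≤ B' := by
  obtain ⟨C, hC, hle⟩ := h.abs_potentialEnergy_sub_energy_le hp hu hl (half_pos one_pos)
  refine ⟨2 * (B + C), ?_⟩
  filter_upwards [hB, h₀.eventually_le_const one_pos, self_mem_nhdsWithin] with ρ hBρ h₀ρ hρ
  linarith [(abs_le.1 (hle ρ hρ)).1, mul_le_mul_of_nonneg_left h₀ρ hC]

lemma tendsto_sum_energy (hl : l ≠ 0) (hu : ContDiff ℝ ∞ u) {B : ℝ}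
    (hB : ∀ᶠ ρ in 𝓝[>] (0 : ℝ), energy l u ρ 3 ≤ B)
    (h₀ : Tendsto (fun ρ => energy l u ρ 0) (𝓝[>] 0) (𝓝 0)) :
    Tendsto (fun ρ => ∑ k ∈ Finset.range 3, energy l u ρ k) (𝓝[>] 0) (𝓝 0) := by
  refine tendsto_zero_of_le_mul_add
    (fun ρ => Finset.sum_nonneg fun k _ => energy_nonneg l u ρ k) h₀ hB fun ε hε => ?_
  obtain ⟨C, -, hC⟩ := sum_energy_le n hl hε
  exact ⟨C, by filter_upwards [self_mem_nhdsWithin] with ρ hρ using hC u hu ρ hρ⟩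

lemma IsSolution.tendsto_potentialEnergy_sub_energy (h : IsSolution p u) (hp : 1 < p) (hl : l ≠ 0)
    (hu : ContDiff ℝ ∞ u) {B : ℝ} (hB : ∀ᶠ ρ in 𝓝[>] (0 : ℝ), energy l u ρ 3 ≤ B)
    (h₀ : Tendsto (fun ρ => energy l u ρ 0) (𝓝[>] 0) (𝓝 0)) :
    Tendsto (fun ρ => potentialEnergy l p u ρ - energy l u ρ 3) (𝓝[>] 0) (𝓝 0) := by
  rw [tendsto_zero_iff_abs_tendsto_zero]
  refine tendsto_zero_of_le_mul_add (fun ρ => abs_nonneg _) h₀ hB fun ε hε => ?_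
  obtain ⟨C, -, hC⟩ := h.abs_potentialEnergy_sub_energy_le hp hu hl hε
  exact ⟨C, by filter_upwards [self_mem_nhdsWithin] with ρ hρ using hC ρ hρ⟩

lemma integrable_of_integral_mul_cut_pow_le (hf : Continuous f) (hf0 : ∀ x, 0 ≤ f x) (hk : k ≠ 0)
    {B : ℝ} (h : ∀ᶠ ρ in 𝓝[>] (0 : ℝ), ∫ x, f x * cut ρ x ^ k ≤ B) : Integrable f := by
  have hball {r : ℝ} : IntegrableOn f (Metric.closedBall 0 r) :=
    hf.continuousOn.integrableOn_compact (isCompact_closedBall _ _)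
  refine (aecover_closedBall (μ := volume) (x := (0 : EuclideanSpace ℝ (Fin n)))
    tendsto_inv_nhdsGT_zero).integrable_of_integral_bounded_of_nonneg_ae B (fun _ => hball)
    (Eventually.of_forall hf0) ?_
  filter_upwards [h, self_mem_nhdsWithin] with ρ hB (hρ : 0 < ρ)
  have hcut := integrable_mul_cut_pow hf hρ hk
  calc ∫ x in Metric.closedBall 0 ρ⁻¹, f x
      = ∫ x in Metric.closedBall 0 ρ⁻¹, f x * cut ρ x ^ k :=
        setIntegral_congr_fun Metric.isClosed_closedBall.measurableSet fun x hx => by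
          have hx' : ρ * ‖x‖ ≤ 1 := by
            simpa [hρ.ne'] using mul_le_mul_of_nonneg_left (mem_closedBall_zero_iff.1 hx) hρ.le
          simp [cut_eq_one hρ.le hx']
    _ ≤ ∫ x, f x * cut ρ x ^ k := setIntegral_le_integral hcut
        (Eventually.of_forall fun x => mul_nonneg (hf0 x) (cut_pow_nonneg ρ k x))
    _ ≤ B := hB

lemma tendsto_integral_mul_of_eq_on_ball {ψ : ℝ → EuclideanSpace ℝ (Fin n) → ℝ} {a M : ℝ}
    (hf : Integrable f) (hψ : ∀ ρ > 0, Measurable (ψ ρ)) (hM : ∀ ρ > 0, ∀ x, |ψ ρ x| ≤ M)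
    (ha : ∀ ρ > 0, ∀ x, ρ * ‖x‖ < 1 → ψ ρ x = a) :
    Tendsto (fun ρ => ∫ x, f x * ψ ρ x) (𝓝[>] 0) (𝓝 (a * ∫ x, f x)) := by
  rw [← integral_const_mul]
  refine tendsto_integral_filter_of_dominated_convergence (fun x => M * |f x|) ?_ ?_
    (hf.abs.const_mul M) (Eventually.of_forall fun x => tendsto_const_nhds.congr' ?_)
  · filter_upwards [self_mem_nhdsWithin] with ρ hρ
    exact hf.aestronglyMeasurable.mul (hψ ρ hρ).aestronglyMeasurable
  · filter_upwards [self_mem_nhdsWithin] with ρ hρ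
    refine Eventually.of_forall fun x => ?_
    rw [Real.norm_eq_abs, abs_mul, mul_comm]
    exact mul_le_mul_of_nonneg_right (hM ρ hρ x) (abs_nonneg _)
  · have hsmall : Tendsto (fun ρ : ℝ => ρ * ‖x‖) (𝓝[>] 0) (𝓝 0) := by
      simpa using ((continuous_id.mul continuous_const).tendsto (0 : ℝ)).mono_left
        (nhdsWithin_le_nhds (s := Set.Ioi 0)) (f := fun ρ : ℝ => ρ * ‖x‖)
    filter_upwards [hsmall.eventually_lt_const one_pos, self_mem_nhdsWithin] with ρ hρx hρ
    rw [ha ρ hρ x hρx, mul_comm]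

lemma tendsto_integral_mul_cut_pow (hf : Integrable f) (k : ℕ) :
    Tendsto (fun ρ => ∫ x, f x * cut ρ x ^ k) (𝓝[>] 0) (𝓝 (∫ x, f x)) := by
  simpa using tendsto_integral_mul_of_eq_on_ball hf (a := 1) (M := 1)
    (ψ := fun ρ x => cut ρ x ^ k) (fun ρ _ => (contDiff_cut_pow ρ k).continuous.measurable)
    (fun ρ _ x => (abs_of_nonneg (cut_pow_nonneg ρ k x)).trans_le (cut_pow_le_one ρ k x))
    fun ρ hρ x hx => by rw [cut_eq_one hρ.le hx.le, one_pow]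

/-- The outcome of the energy estimates: both parts of the energy are finite and equal, and the
localized energies of order below three vanish in the limit. -/
structure HasFiniteEnergy (l : ℕ) (p : ℝ) (u : EuclideanSpace ℝ (Fin n) → ℝ) : Prop where
  integrable_potential : Integrable (potential p u)
  integrable_derivSq : Integrable (derivSq 3 u)
  integral_potential_eq : ∫ x, potential p u x = ∫ x, derivSq 3 u x
  tendsto_sum_energy : Tendsto (fun ρ => ∑ k ∈ Finset.range 3, energy l u ρ k) (𝓝[>] 0) (𝓝 0)

lemma energy_three_eq (l : ℕ) (u : EuclideanSpace ℝ (Fin n) → ℝ) (ρ : ℝ) :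
    energy l u ρ 3 = ∫ x, derivSq 3 u x * cut ρ x ^ (2 * l + 6) := by
  simp [energy, scaledNorm_sq, mul_add]

lemma IsSolution.hasFiniteEnergy (h : IsSolution p u) (hp : 1 < p)
    (hd : 0 < 6 + 12 / (p - 1) - n) (hl : l ≠ 0) (hlp : 12 / (p - 1) ≤ 2 * l)
    (hu : ContDiff ℝ ∞ u) {Θ : Set (EuclideanSpace ℝ (Fin n))} (hΘ : Bornology.IsBounded Θ)
    (hstab : IsStableOutside p u Θ) : HasFiniteEnergy l p u := by
  obtain ⟨B, hB⟩ := eventually_potentialEnergy_le hp hd hl hlp hu h hΘ hstab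
  have h₀ := tendsto_energy_zero hp hd hl hlp hu hB
  obtain ⟨B', hB'⟩ := h.eventually_energy_three_le hp hl hu hB h₀
  have hpot : Integrable (potential p u) :=
    integrable_of_integral_mul_cut_pow_le (continuous_potential hp hu.continuous)
      (potential_nonneg p u) (by omega) hB
  have hder : Integrable (derivSq 3 u) :=
    integrable_of_integral_mul_cut_pow_le (contDiff_derivSq 3 hu).continuous
      (derivSq_nonneg 3 u) (Nat.succ_ne_zero (2 * l + 5))
      (by simpa only [energy_three_eq] using hB')
  refine ⟨hpot, hder, sub_eq_zero.1 (tendsto_nhds_unique ?_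
    (h.tendsto_potentialEnergy_sub_energy hp hl hu hB' h₀)), tendsto_sum_energy hl hu hB' h₀⟩
  simp only [potentialEnergy, energy_three_eq]
  exact (tendsto_integral_mul_cut_pow hpot _).sub (tendsto_integral_mul_cut_pow hder _)

/-! ### The Euler operator -/

/-- The Euler operator `x · ∇f`, the generator of dilations. -/
def euler (f : EuclideanSpace ℝ (Fin n) → ℝ) (x : EuclideanSpace ℝ (Fin n)) : ℝ :=
  fderiv ℝ f x x

lemma contDiff_euler (hf : ContDiff ℝ ∞ f) : ContDiff ℝ ∞ (euler f) :=
  (hf.fderiv_right (by simp)).clm_apply contDiff_id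

lemma euler_eq_sum (f : EuclideanSpace ℝ (Fin n) → ℝ) (x : EuclideanSpace ℝ (Fin n)) :
    euler f x = ∑ i, pderiv i f x * x i := by
  have hx : x = ∑ i, x i • EuclideanSpace.single i (1 : ℝ) := by
    simpa using ((EuclideanSpace.basisFun (Fin n) ℝ).sum_repr x).symm
  conv_lhs => rw [euler, hx, map_sum, ← hx]
  simp [pderiv, mul_comm]

lemma abs_euler_le (f : EuclideanSpace ℝ (Fin n) → ℝ) (x : EuclideanSpace ℝ (Fin n)) :
    |euler f x| ≤ ‖x‖ * derivNorm 1 f x := by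
  have hnorm : ‖fderiv ℝ f x‖ = derivNorm 1 f x := by
    rw [derivNorm, ← norm_gradient_sq, Real.sqrt_sq (norm_nonneg _), gradient,
      LinearIsometryEquiv.norm_map]
  rw [← hnorm, mul_comm]
  exact (fderiv ℝ f x).le_opNorm x

lemma pderiv_euler (hf : ContDiff ℝ ∞ f) (i : Fin n) :
    pderiv i (euler f) = pderiv i f + euler (pderiv i f) := by
  funext x
  have hd : Differentiable ℝ (fderiv ℝ f) :=
    ContDiff.differentiable (n := ∞) (hf.fderiv_right (by simp)) (by simp)
  have hleft : pderiv i (euler f) x =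
      pderiv i f x + fderiv ℝ (fderiv ℝ f) x (EuclideanSpace.single i 1) x := by
    change fderiv ℝ (fun y => fderiv ℝ f y y) x _ = _
    simp [fderiv_clm_apply (hd x) differentiableAt_fun_id, pderiv]
  have hright : euler (pderiv i f) x =
      fderiv ℝ (fderiv ℝ f) x x (EuclideanSpace.single i 1) := by
    change fderiv ℝ (fun y => fderiv ℝ f y (EuclideanSpace.single i 1)) x _ = _
    simp [fderiv_clm_apply (hd x) (differentiableAt_const _)]
  rw [hleft, Pi.add_apply, hright, isSymmSndFDerivAt_of_smooth hf x]

lemma pderiv_smul_add_euler (hf : ContDiff ℝ ∞ f) (c : ℝ) (i : Fin n) :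
    pderiv i (c • f + euler f) = (c + 1) • pderiv i f + euler (pderiv i f) := by
  have hcf : ContDiff ℝ ∞ (c • f) := hf.const_smul c
  rw [pderiv_add hcf (contDiff_euler hf), pderiv_smul, pderiv_euler hf, add_smul, one_smul,
    add_assoc]

lemma euler_sum {ι : Type*} {S : Finset ι} {F : ι → EuclideanSpace ℝ (Fin n) → ℝ}
    (hF : ∀ j ∈ S, ContDiff ℝ ∞ (F j)) : euler (∑ j ∈ S, F j) = ∑ j ∈ S, euler (F j) := by
  funext x
  simp [euler, fderiv_sum fun j hj => differentiable_of_smooth (hF j hj) x]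

lemma euler_mul_self (hf : ContDiff ℝ ∞ f) : euler (f * f) = (2 : ℝ) • (f * euler f) := by
  funext x
  simp only [euler, fderiv_mul (differentiable_of_smooth hf x) (differentiable_of_smooth hf x)]
  simp only [add_apply, smul_apply, smul_eq_mul, Pi.smul_apply, Pi.mul_apply, euler]
  ring

lemma derivInner_smul_add_euler (k : ℕ) (hf : ContDiff ℝ ∞ f) (c : ℝ) :
    derivInner k f (c • f + euler f) =
      (c + k) • derivSq k f + (1 / 2 : ℝ) • euler (derivSq k f) := by
  induction k generalizing f c with
  | zero =>
    simp only [derivSq, derivInner, euler_mul_self hf, mul_add, mul_smul_comm, smul_smul]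
    norm_num
  | succ k ih =>
    have hsq (i : Fin n) := contDiff_derivSq k (contDiff_pderiv hf i)
    simp only [derivSq, derivInner] at ih hsq ⊢
    simp only [pderiv_smul_add_euler hf, ih (contDiff_pderiv hf _), euler_sum fun i _ => hsq i,
      Finset.sum_add_distrib, Finset.smul_sum]
    simp only [Nat.cast_succ, add_assoc, add_comm (1 : ℝ)]

lemma derivSq_smul_add_euler_le (k : ℕ) (hf : ContDiff ℝ ∞ f) (hc : 0 ≤ c)
    (x : EuclideanSpace ℝ (Fin n)) :
    derivSq k (c • f + euler f) x ≤
      2 * ((c + k) ^ 2 * derivSq k f x + ‖x‖ ^ 2 * derivSq (k + 1) f x) := by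
  induction k generalizing f c with
  | zero =>
    have hsq : euler f x ^ 2 ≤ ‖x‖ ^ 2 * derivSq 1 f x := by
      rw [← derivNorm_sq, ← mul_pow, ← sq_abs]
      gcongr
      exact abs_euler_le f x
    simp only [derivSq_zero_apply, Pi.add_apply, Pi.smul_apply, smul_eq_mul, Nat.cast_zero,
      add_zero, zero_add]
    linarith [add_sq_le (a := c * f x) (b := euler f x)]
  | succ k ih =>
    rw [derivSq_succ_apply, derivSq_succ_apply k f, derivSq_succ_apply (k + 1) f, Finset.mul_sum,
      Finset.mul_sum, ← Finset.sum_add_distrib, Finset.mul_sum]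
    refine Finset.sum_le_sum fun i _ => ?_
    rw [pderiv_smul_add_euler hf, Nat.cast_succ, add_comm (k : ℝ), ← add_assoc]
    exact ih (contDiff_pderiv hf i) (by positivity)

lemma derivNorm_euler_le (k : ℕ) (hf : ContDiff ℝ ∞ f) (x : EuclideanSpace ℝ (Fin n)) :
    derivNorm k (euler f) x ≤ 2 * (k * derivNorm k f x + ‖x‖ * derivNorm (k + 1) f x) := by
  have hsq := derivSq_smul_add_euler_le k hf le_rfl x
  rw [zero_smul, zero_add, zero_add, ← derivNorm_sq, ← derivNorm_sq, ← derivNorm_sq] at hsq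
  have hk := derivNorm_nonneg k f x
  have hk' := derivNorm_nonneg (k + 1) f x
  refine abs_le_of_sq_le_sq' (hsq.trans ?_) (by positivity) |>.2
  nlinarith [mul_nonneg (mul_nonneg k.cast_nonneg hk) (mul_nonneg (norm_nonneg x) hk'),
    sq_nonneg (k * derivNorm k f x), sq_nonneg (‖x‖ * derivNorm (k + 1) f x)]

lemma integral_euler_mul (hf : ContDiff ℝ 1 f) (hψ : ContDiff ℝ ∞ ψ) (hc : HasCompactSupport ψ) :
    ∫ x, euler f x * ψ x = -∫ x, f x * (n * ψ x + euler ψ x) := by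
  have hcoord (i : Fin n) : ContDiff ℝ ∞ fun x : EuclideanSpace ℝ (Fin n) => x i :=
    (EuclideanSpace.proj (𝕜 := ℝ) i).contDiff
  have hpderiv (i : Fin n) (x : EuclideanSpace ℝ (Fin n)) :
      pderiv i ((fun x => x i) * ψ) x = ψ x + pderiv i ψ x * x i := by
    have hi : pderiv i (fun x : EuclideanSpace ℝ (Fin n) => x i) = 1 := by
      funext x
      have hx : HasFDerivAt (fun x : EuclideanSpace ℝ (Fin n) => x i)
        (EuclideanSpace.proj (𝕜 := ℝ) i) x := (EuclideanSpace.proj (𝕜 := ℝ) i).hasFDerivAt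
      simp [pderiv, hx.fderiv]
    rw [pderiv_mul (hcoord i) hψ, hi, one_mul, Pi.add_apply, Pi.mul_apply, mul_comm]
  have hdiv (x : EuclideanSpace ℝ (Fin n)) :
      n * ψ x + euler ψ x = ∑ i, pderiv i ((fun x => x i) * ψ) x := by
    simp [hpderiv, Finset.sum_add_distrib, euler_eq_sum]
  have hsm (i : Fin n) := smooth_mul (hcoord i) hψ
  have hcs (i : Fin n) : HasCompactSupport ((fun x => x i) * ψ) := hc.mul_left
  simp only [hdiv, euler_eq_sum f, Finset.mul_sum, Finset.sum_mul]
  rw [integral_finsetSum, integral_finsetSum, ← Finset.sum_neg_distrib]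
  · refine Finset.sum_congr rfl fun i _ => ?_
    rw [← integral_pderiv_mul hf (contDiff_one_of_smooth (hsm i)) (hcs i)]
    simp only [Pi.mul_apply, mul_assoc]
  · exact fun i _ => (hf.continuous.mul (contDiff_pderiv (hsm i) i).continuous)
      |>.integrable_of_hasCompactSupport (hasCompactSupport_pderiv (hcs i) i).mul_left
  · exact fun i _ => (((continuous_pderiv hf i).mul (hcoord i).continuous).mul hψ.continuous)
      |>.integrable_of_hasCompactSupport hc.mul_left

/-! ### The Pohozaev identity -/

lemma contDiff_potential (hp : 0 < p) (hu : ContDiff ℝ 1 u) : ContDiff ℝ 1 (potential p u) :=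
  hu.norm_rpow (by linarith)

lemma euler_potential (hp : 0 < p) (hu : DifferentiableAt ℝ u x) :
    euler (potential p u) x = (p + 1) * (|u x| ^ (p - 1) * u x * euler u x) := by
  have hd : HasFDerivAt (potential p u) _ x :=
    (hasDerivAt_abs_rpow (u x) (p := p + 1) (by linarith)).comp_hasFDerivAt x hu.hasFDerivAt
  rw [euler, hd.fderiv, ← show p + 1 - 2 = p - 1 by ring]
  simp only [smul_apply, smul_eq_mul, euler]
  ring

lemma IsSolution.integral_potential_mul (h : IsSolution p u) (hp : 0 < p) (hu : ContDiff ℝ ∞ u)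
    (hψ : ContDiff ℝ ∞ ψ) (hc : HasCompactSupport ψ) :
    ∫ x, potential p u x * (n * ψ x + euler ψ x) =
      -((p + 1) * ∫ x, derivInner 3 u (euler u * ψ) x) := by
  rw [← h.integral_mul_eq hu (smooth_mul (contDiff_euler hu) hψ) hc.mul_left,
    eq_neg_iff_add_eq_zero, ← neg_eq_iff_add_eq_zero,
    ← integral_euler_mul (contDiff_potential hp (contDiff_one_of_smooth hu)) hψ hc,
    ← integral_const_mul]
  simp only [euler_potential hp (differentiable_of_smooth hu _), Pi.mul_apply, mul_assoc]

lemma integral_derivInner_euler_mul (k : ℕ) (hf : ContDiff ℝ ∞ f) (hψ : ContDiff ℝ ∞ ψ)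
    (hc : HasCompactSupport ψ) :
    ∫ x, derivInner k f (euler f) x * ψ x = k * (∫ x, derivSq k f x * ψ x) -
      1 / 2 * ∫ x, derivSq k f x * (n * ψ x + euler ψ x) := by
  have hS := contDiff_derivSq k hf
  have hpair := derivInner_smul_add_euler k hf 0
  rw [zero_smul, zero_add, zero_add] at hpair
  have hint {w : EuclideanSpace ℝ (Fin n) → ℝ} (hw : Continuous w) :
      Integrable fun x => w x * ψ x :=
    (hw.mul hψ.continuous).integrable_of_hasCompactSupport hc.mul_left
  rw [sub_eq_add_neg, ← mul_neg, ← integral_euler_mul (contDiff_one_of_smooth hS) hψ hc,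
    ← integral_const_mul, ← integral_const_mul, ← integral_add
      ((hint hS.continuous).const_mul _) ((hint (contDiff_euler hS).continuous).const_mul _)]
  simp only [hpair, Pi.add_apply, Pi.smul_apply, smul_eq_mul, add_mul, mul_assoc]

lemma derivSq_succ_const (k : ℕ) (c : ℝ) (x : EuclideanSpace ℝ (Fin n)) :
    derivSq (k + 1) (fun _ => c) x = 0 := by
  have hzero (i : Fin n) : pderiv i (fun _ => c) = (0 : ℝ) • fun _ => c := by
    funext y
    simp [pderiv]
  simp only [derivSq_succ_apply, hzero, derivSq_smul]
  simp

lemma derivNorm_succ_cut_pow_eq_zero (j k : ℕ) (hρ : 0 ≤ ρ) (hx : ρ * ‖x‖ < 1) :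
    derivNorm (j + 1) (cut ρ ^ k) x = 0 := by
  rw [derivNorm, derivSq_congr (j + 1) (cut_pow_eventuallyEq_one hρ k hx), derivSq_succ_const,
    Real.sqrt_zero]

lemma euler_cut_pow_eq_zero (k : ℕ) (hρ : 0 ≤ ρ) (hx : ρ * ‖x‖ < 1) :
    euler (cut ρ ^ k) x = 0 := by
  have hle := abs_euler_le (cut ρ ^ k) x
  rwa [derivNorm_succ_cut_pow_eq_zero 0 k hρ hx, mul_zero, abs_nonpos_iff] at hle

lemma mul_norm_mul_cut_pow_le (hρ : 0 ≤ ρ) (hk : k ≠ 0) (x : EuclideanSpace ℝ (Fin n)) :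
    ρ * ‖x‖ * cut ρ x ^ k ≤ 2 * cut ρ x ^ k := by
  rcases le_total (ρ * ‖x‖) 2 with hx | hx
  · exact mul_le_mul_of_nonneg_right hx (cut_pow_nonneg ρ k x)
  · simp [cut_eq_zero hρ hx, hk]

lemma exists_abs_euler_cut_pow_le (n : ℕ) (hk : k ≠ 0) :
    ∃ M, ∀ ρ > 0, ∀ x : EuclideanSpace ℝ (Fin n), |euler (cut ρ ^ (k + 1)) x| ≤ M := by
  obtain ⟨M, hM0, hM⟩ := derivNorm_cut_pow_le n hk 1
  refine ⟨M * 2, fun ρ hρ x => ?_⟩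
  calc |euler (cut ρ ^ (k + 1)) x|
      ≤ ‖x‖ * (M * (ρ ^ 1 * cut ρ x ^ k)) := (abs_euler_le _ x).trans (by gcongr; exact hM ρ hρ x)
    _ = M * (ρ * ‖x‖ * cut ρ x ^ k) := by ring
    _ ≤ M * (2 * cut ρ x ^ k) := by gcongr M * ?_; exact mul_norm_mul_cut_pow_le hρ.le hk x
    _ ≤ M * 2 := by gcongr; linarith [cut_pow_le_one ρ k x]

lemma tendsto_integral_mul_add_euler_cut_pow (hf : Integrable f) (hk : k ≠ 0) :
    Tendsto (fun ρ => ∫ x, f x * (n * (cut ρ ^ (k + 1)) x + euler (cut ρ ^ (k + 1)) x))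
      (𝓝[>] 0) (𝓝 (n * ∫ x, f x)) := by
  obtain ⟨M, hM⟩ := exists_abs_euler_cut_pow_le n hk
  refine tendsto_integral_mul_of_eq_on_ball (M := n + M) hf (fun ρ _ => ?_) (fun ρ hρ x => ?_)
    fun ρ hρ x hx => ?_
  · have hcut := contDiff_cut_pow (n := n) ρ (k + 1)
    exact ((hcut.continuous.const_mul _).add (contDiff_euler hcut).continuous).measurable
  · refine (abs_add_le _ _).trans (add_le_add ?_ (hM ρ hρ x))
    rw [Pi.pow_apply, abs_of_nonneg (mul_nonneg n.cast_nonneg (cut_pow_nonneg ρ _ x))]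
    exact mul_le_of_le_one_right n.cast_nonneg (cut_pow_le_one ρ _ x)
  · rw [euler_cut_pow_eq_zero _ hρ.le hx, Pi.pow_apply, cut_eq_one hρ.le hx.le, one_pow, mul_one,
      add_zero]

lemma scaledNorm_euler_le (hu : ContDiff ℝ ∞ u) (hρ : 0 ≤ ρ) (l : ℕ) (hk : k < 3)
    (x : EuclideanSpace ℝ (Fin n)) :
    scaledNorm (l + 1) (euler u) ρ k x ≤
      4 * (scaledNorm l u ρ k x + scaledNorm l u ρ (k + 1) x) := by
  have hk2 : (k : ℝ) ≤ 2 := by exact_mod_cast Nat.le_of_lt_succ hk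
  have hN := derivNorm_nonneg k u x
  have hN' := derivNorm_nonneg (k + 1) u x
  have hcut := cut_nonneg ρ x
  have hpow : ρ ^ (3 - k) = ρ ^ (3 - (k + 1)) * ρ := by rw [← pow_succ]; congr 1; omega
  calc scaledNorm (l + 1) (euler u) ρ k x
      ≤ ρ ^ (3 - k) * (2 * (2 * derivNorm k u x + ‖x‖ * derivNorm (k + 1) u x)) *
          cut ρ x ^ (l + (k + 1)) := by
        rw [scaledNorm, add_assoc l 1 k, add_comm 1 k]
        gcongr
        exact (derivNorm_euler_le k hu x).trans (by gcongr)
    _ = 4 * (ρ ^ (3 - k) * derivNorm k u x * cut ρ x ^ (l + (k + 1))) +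
          2 * (ρ ^ (3 - (k + 1)) * derivNorm (k + 1) u x) *
            (ρ * ‖x‖ * cut ρ x ^ (l + (k + 1))) := by rw [hpow]; ring
    _ ≤ 4 * (ρ ^ (3 - k) * derivNorm k u x * cut ρ x ^ (l + k)) +
          2 * (ρ ^ (3 - (k + 1)) * derivNorm (k + 1) u x) * (2 * cut ρ x ^ (l + (k + 1))) := by
        gcongr 4 * (_ * ?_) + _ * ?_
        · exact pow_le_pow_of_le_one hcut (cut_le_one ρ x) (by omega)
        · exact mul_norm_mul_cut_pow_le hρ (by omega) x
    _ = _ := by rw [scaledNorm, scaledNorm]; ring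

lemma sum_scaledNorm_euler_le (hu : ContDiff ℝ ∞ u) (hρ : 0 ≤ ρ) (l : ℕ)
    (x : EuclideanSpace ℝ (Fin n)) :
    ∑ k ∈ Finset.range 3, scaledNorm (l + 1) (euler u) ρ k x ≤
      8 * (∑ k ∈ Finset.range 3, scaledNorm l u ρ k x + derivNorm 3 u x) := by
  have hthree : scaledNorm l u ρ 3 x ≤ derivNorm 3 u x := by
    simpa [scaledNorm] using
      mul_le_of_le_one_right (derivNorm_nonneg 3 u x) (cut_pow_le_one ρ (l + 3) x)
  have hk := fun k (h : k < 3) => scaledNorm_euler_le hu hρ l h x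
  have h0 := fun k => scaledNorm_nonneg hρ l u k x
  simp only [Finset.sum_range_succ, Finset.sum_range_zero]
  linarith [hk 0 (by norm_num), hk 1 (by norm_num), hk 2 (by norm_num), h0 0, h0 1, h0 2,
    derivNorm_nonneg 3 u x]

lemma commutatorBound_euler_cut_pow_le (n l : ℕ) :
    ∃ C ≥ 0, ∀ u : EuclideanSpace ℝ (Fin n) → ℝ, ContDiff ℝ ∞ u → ∀ ρ > 0, ∀ x,
      commutatorBound (euler u) (cut ρ ^ (l + 4)) x ≤ C *
        (∑ k ∈ Finset.range 3, scaledNorm l u ρ k x + derivNorm 3 u x) := by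
  obtain ⟨C, hC0, hC⟩ := commutatorBound_cut_pow_le n l.succ_ne_zero
  refine ⟨C * 8, by positivity, fun u hu ρ hρ x => (hC ρ hρ _ x).trans ?_⟩
  rw [mul_assoc]
  gcongr
  exact sum_scaledNorm_euler_le hu hρ.le l x

lemma commutatorBound_cut_pow_eq_zero (hρ : 0 ≤ ρ) (k : ℕ)
    (f : EuclideanSpace ℝ (Fin n) → ℝ) (hx : ρ * ‖x‖ < 1) :
    commutatorBound f (cut ρ ^ k) x = 0 := by
  simp [commutatorBound, fun j => derivNorm_succ_cut_pow_eq_zero j k hρ hx]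

lemma mul_mul_add_le (hε : 0 < ε) (L a b : ℝ) :
    L * (a * (b + a)) ≤ ε * a ^ 2 + L ^ 2 / (4 * ε) * b ^ 2 + L * a ^ 2 := by
  linarith [mul_mul_le_add_sq hε L a b, sq a]

lemma abs_derivInner_three_euler_mul_cut_pow_sub_le (n l : ℕ) (hε : 0 < ε) :
    ∃ C ≥ 0, ∀ u : EuclideanSpace ℝ (Fin n) → ℝ, ContDiff ℝ ∞ u → ∀ ρ > 0, ∀ x,
      |derivInner 3 u (euler u * cut ρ ^ (l + 4)) x -
          derivInner 3 u (euler u) x * (cut ρ ^ (l + 4)) x| ≤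
        ε * derivSq 3 u x + C * (∑ k ∈ Finset.range 3, scaledNorm l u ρ k x ^ 2 +
          {y | 1 ≤ ρ * ‖y‖}.indicator (derivSq 3 u) x) := by
  obtain ⟨K, hK0, hK⟩ := commutatorBound_euler_cut_pow_le n l
  set L := n ^ 3 * K with hL
  have hL0 : 0 ≤ L := by positivity
  refine ⟨L ^ 2 / (4 * ε) * 3 + L, by positivity, fun u hu ρ hρ x => ?_⟩
  set T := ∑ k ∈ Finset.range 3, scaledNorm l u ρ k x
  have hcomm := abs_derivInner_three_mul_sub_le (contDiff_euler hu) (contDiff_cut_pow ρ (l + 4)) u x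
  have hS := derivSq_nonneg 3 u x
  have hsum : 0 ≤ ∑ k ∈ Finset.range 3, scaledNorm l u ρ k x ^ 2 :=
    Finset.sum_nonneg fun k _ => sq_nonneg _
  rcases lt_or_ge (ρ * ‖x‖) 1 with hx | hx
  · rw [commutatorBound_cut_pow_eq_zero hρ.le _ _ hx, mul_zero, mul_zero] at hcomm
    refine hcomm.trans ?_
    have hmem : x ∉ {y | 1 ≤ ρ * ‖y‖} := not_le.2 hx
    rw [Set.indicator_of_notMem hmem, add_zero]
    positivity
  have hmem : x ∈ {y | 1 ≤ ρ * ‖y‖} := hx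
  rw [Set.indicator_of_mem hmem]
  calc _ ≤ n ^ 3 * (derivNorm 3 u x * commutatorBound (euler u) (cut ρ ^ (l + 4)) x) := hcomm
    _ ≤ n ^ 3 * (derivNorm 3 u x * (K * (T + derivNorm 3 u x))) := by
        gcongr
        exacts [derivNorm_nonneg 3 u x, hK u hu ρ hρ x]
    _ = L * (derivNorm 3 u x * (T + derivNorm 3 u x)) := by rw [hL]; ring
    _ ≤ ε * derivSq 3 u x + L ^ 2 / (4 * ε) * T ^ 2 + L * derivSq 3 u x := by
        rw [← derivNorm_sq]
        exact mul_mul_add_le hε L _ T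
    _ ≤ ε * derivSq 3 u x +
          L ^ 2 / (4 * ε) * (3 * ∑ k ∈ Finset.range 3, scaledNorm l u ρ k x ^ 2) +
          L * derivSq 3 u x := by
        gcongr
        exact sq_sum_scaledNorm_le l u ρ x
    _ ≤ _ := by
        have hL' : 0 ≤ L ^ 2 / (4 * ε) * 3 := by positivity
        linarith [mul_nonneg hL' hS, mul_nonneg hL0 hsum]

lemma measurableSet_one_le_mul_norm (n : ℕ) (ρ : ℝ) :
    MeasurableSet {x : EuclideanSpace ℝ (Fin n) | 1 ≤ ρ * ‖x‖} :=
  measurableSet_le measurable_const (measurable_norm.const_mul ρ)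

lemma abs_integral_derivInner_three_euler_mul_cut_pow_sub_le (n : ℕ) (hl : l ≠ 0) (hε : 0 < ε) :
    ∃ C ≥ 0, ∀ u : EuclideanSpace ℝ (Fin n) → ℝ, ContDiff ℝ ∞ u → Integrable (derivSq 3 u) →
      ∀ ρ > 0, |∫ x, (derivInner 3 u (euler u * cut ρ ^ (l + 4)) x -
          derivInner 3 u (euler u) x * (cut ρ ^ (l + 4)) x)| ≤
        ε * (∫ x, derivSq 3 u x) + C * (∑ k ∈ Finset.range 3, energy l u ρ k +
          ∫ x in {x | 1 ≤ ρ * ‖x‖}, derivSq 3 u x) := by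
  obtain ⟨C, hC0, hC⟩ := abs_derivInner_three_euler_mul_cut_pow_sub_le n l hε
  refine ⟨C, hC0, fun u hu hint ρ hρ => ?_⟩
  have hS := measurableSet_one_le_mul_norm n ρ
  have hsum := integrable_sum_scaledNorm_sq hu hρ hl
  have hsum_eq : ∫ x, ∑ k ∈ Finset.range 3, scaledNorm l u ρ k x ^ 2 =
      ∑ k ∈ Finset.range 3, energy l u ρ k :=
    integral_finsetSum _ fun k _ => integrable_scaledNorm_sq hu hρ hl k
  have hout := hint.indicator hS
  have hsum_out : Integrable fun x => ∑ k ∈ Finset.range 3, scaledNorm l u ρ k x ^ 2 +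
      {x | 1 ≤ ρ * ‖x‖}.indicator (derivSq 3 u) x := hsum.add hout
  rw [← integral_indicator hS, ← hsum_eq, ← integral_add hsum hout, ← integral_const_mul,
    ← integral_const_mul, ← integral_add (hint.const_mul ε) (hsum_out.const_mul C)]
  exact abs_integral_le_integral_abs.trans
    (integral_mono_of_nonneg (Eventually.of_forall fun _ => abs_nonneg _)
      ((hint.const_mul ε).add (hsum_out.const_mul C)) (Eventually.of_forall (hC u hu ρ hρ)))

lemma tendsto_setIntegral_one_le_mul_norm (hf : Integrable f) :
    Tendsto (fun ρ => ∫ x in {x | 1 ≤ ρ * ‖x‖}, f x) (𝓝[>] 0) (𝓝 0) := by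
  have hlim := tendsto_integral_mul_of_eq_on_ball hf (a := 0) (M := 1)
    (ψ := fun ρ => {x | 1 ≤ ρ * ‖x‖}.indicator 1)
    (fun ρ _ => measurable_one.indicator (measurableSet_one_le_mul_norm n ρ))
    (fun ρ _ x => by by_cases hx : 1 ≤ ρ * ‖x‖ <;> simp [hx])
    fun ρ _ x hx => by simp [hx]
  rw [zero_mul] at hlim
  refine hlim.congr fun ρ => ?_
  rw [← integral_indicator (measurableSet_one_le_mul_norm n ρ)]
  refine integral_congr_ae (Eventually.of_forall fun x => ?_)
  by_cases hx : 1 ≤ ρ * ‖x‖ <;> simp [hx]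

lemma HasFiniteEnergy.tendsto_integral_euler_sub (h : HasFiniteEnergy l p u)
    (hu : ContDiff ℝ ∞ u) (hl : l ≠ 0) :
    Tendsto (fun ρ => ∫ x, (derivInner 3 u (euler u * cut ρ ^ (l + 4)) x -
      derivInner 3 u (euler u) x * (cut ρ ^ (l + 4)) x)) (𝓝[>] 0) (𝓝 0) := by
  rw [tendsto_zero_iff_abs_tendsto_zero]
  have hsmall :=
    h.tendsto_sum_energy.add (tendsto_setIntegral_one_le_mul_norm h.integrable_derivSq)
  rw [add_zero] at hsmall
  refine tendsto_zero_of_le_mul_add (h := fun _ => ∫ x, derivSq 3 u x) (fun ρ => abs_nonneg _)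
    hsmall (Eventually.of_forall fun _ => le_rfl) fun ε hε => ?_
  obtain ⟨C, -, hC⟩ := abs_integral_derivInner_three_euler_mul_cut_pow_sub_le n hl hε
  refine ⟨C, ?_⟩
  filter_upwards [self_mem_nhdsWithin] with ρ hρ
  exact hC u hu h.integrable_derivSq ρ hρ

lemma integral_derivInner_three_euler_mul_cut_pow (hρ : 0 < ρ) (l : ℕ) (hu : ContDiff ℝ ∞ u) :
    ∫ x, derivInner 3 u (euler u * cut ρ ^ (l + 4)) x =
      (∫ x, (derivInner 3 u (euler u * cut ρ ^ (l + 4)) x -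
        derivInner 3 u (euler u) x * (cut ρ ^ (l + 4)) x)) +
      (3 * (∫ x, derivSq 3 u x * (cut ρ ^ (l + 4)) x) - 1 / 2 *
        ∫ x, derivSq 3 u x * (n * (cut ρ ^ (l + 4)) x + euler (cut ρ ^ (l + 4)) x)) := by
  have hcut := contDiff_cut_pow (n := n) ρ (l + 4)
  have hcs := hasCompactSupport_cut_pow (n := n) hρ (Nat.succ_ne_zero (l + 3))
  have hint : Integrable fun x => derivInner 3 u (euler u) x * (cut ρ ^ (l + 4)) x :=
    integrable_mul_cut_pow (contDiff_derivInner 3 hu (contDiff_euler hu)).continuous hρ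
      (Nat.succ_ne_zero (l + 3))
  rw [integral_sub (integrable_derivInner 3 hu (smooth_mul (contDiff_euler hu) hcut)
    hcs.mul_left) hint, integral_derivInner_euler_mul 3 hu hcut hcs]
  push_cast
  ring

lemma HasFiniteEnergy.tendsto_integral_derivInner_euler_mul (h : HasFiniteEnergy l p u)
    (hu : ContDiff ℝ ∞ u) (hl : l ≠ 0) :
    Tendsto (fun ρ => ∫ x, derivInner 3 u (euler u * cut ρ ^ (l + 4)) x) (𝓝[>] 0)
      (𝓝 ((3 - n / 2) * ∫ x, derivSq 3 u x)) := by
  have hlim := (h.tendsto_integral_euler_sub hu hl).add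
    (((tendsto_integral_mul_cut_pow h.integrable_derivSq (l + 4)).const_mul 3).sub
      ((tendsto_integral_mul_add_euler_cut_pow h.integrable_derivSq
        (Nat.succ_ne_zero (l + 2))).const_mul (1 / 2)))
  convert hlim.congr' ?_ using 2
  · ring
  · filter_upwards [self_mem_nhdsWithin] with ρ hρ
    exact (integral_derivInner_three_euler_mul_cut_pow hρ l hu).symm

lemma IsSolution.pohozaev (h : IsSolution p u) (hp : 0 < p) (hu : ContDiff ℝ ∞ u) (hl : l ≠ 0)
    (hE : HasFiniteEnergy l p u) :
    n * ∫ x, potential p u x = -((p + 1) * ((3 - n / 2) * ∫ x, derivSq 3 u x)) := by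
  refine tendsto_nhds_unique (tendsto_integral_mul_add_euler_cut_pow hE.integrable_potential
    (Nat.succ_ne_zero (l + 2))) ?_
  refine ((hE.tendsto_integral_derivInner_euler_mul hu hl).const_mul (p + 1)).neg.congr' ?_
  filter_upwards [self_mem_nhdsWithin] with ρ hρ
  exact (h.integral_potential_mul hp hu (contDiff_cut_pow ρ (l + 4))
    (hasCompactSupport_cut_pow hρ (Nat.succ_ne_zero _))).symm

lemma HasFiniteEnergy.eq_zero (hE : HasFiniteEnergy l p u) (h : IsSolution p u) (hp : 1 < p)
    (hsub : p * (n - 6) < n + 6) (hu : ContDiff ℝ ∞ u) (hl : l ≠ 0) : u = 0 := by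
  have hpoh := h.pohozaev (by linarith) hu hl hE
  rw [← hE.integral_potential_eq] at hpoh
  have hzero : ∫ x, potential p u x = 0 := by
    have hfactor : (n + 6 - p * (n - 6)) * ∫ x, potential p u x = 0 := by linarith
    exact (mul_eq_zero.1 hfactor).resolve_left (sub_pos.2 hsub).ne'
  have hpot := (continuous_potential hp hu.continuous).ae_eq_iff_eq volume continuous_zero |>.1
    ((integral_eq_zero_iff_of_nonneg (potential_nonneg p u) hE.integrable_potential).1 hzero)
  funext x
  have hx : |u x| ^ (p + 1) = 0 := congrFun hpot x
  exact abs_eq_zero.1 ((Real.rpow_eq_zero (abs_nonneg _) (by linarith)).1 hx)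

end TriharmonicLaneEmden

open TriharmonicLaneEmden in
theorem triharmonic_finiteMorse_subcritical_general {n : ℕ} {p : ℝ} (hp : 1 < p)
    (hsub : p * (n - 6) < n + 6) {u : EuclideanSpace ℝ (Fin n) → ℝ} (hu : ContDiff ℝ (⊤ : ℕ∞) u)
    (h : IsSolution p u) {Θ : Set (EuclideanSpace ℝ (Fin n))} (hΘ : Bornology.IsBounded Θ)
    (hstab : IsStableOutside p u Θ) : u = 0 := by
  have hdecay : 0 < 6 + 12 / (p - 1) - n := by
    have : n - 6 < 12 / (p - 1) := by
      rw [lt_div_iff₀ (sub_pos.2 hp)]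
      linarith
    linarith
  obtain ⟨l, hl⟩ := exists_nat_gt (12 / (p - 1))
  have hl0 : 0 < (l : ℝ) := (div_pos (by norm_num) (sub_pos.2 hp)).trans hl
  have hl' : l ≠ 0 := by exact_mod_cast hl0.ne'
  exact (h.hasFiniteEnergy hp hdecay hl' (by linarith) hu hΘ hstab).eq_zero h hp hsub hu hl'

/-- **Theorem 1.2(1) (subcritical case).** Let `n ≥ 7` and let `u` be a smooth solution of
`(-Δ)³ u = |u|^{p-1} u` on `ℝⁿ` that is stable outside a compact set `Θ`. If
`1 < p < (n+6)/(n-6)`, then `u ≡ 0`. -/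
theorem triharmonic_finiteMorse_subcritical (n : ℕ) (hn : 7 ≤ n) (p : ℝ) (hp1 : 1 < p)
    (hp2 : p < ((n : ℝ) + 6) / ((n : ℝ) - 6))
    (u : EuclideanSpace ℝ (Fin n) → ℝ) (hu : ContDiff ℝ (⊤ : ℕ∞) u)
    (heq : ∀ x, laplacian (laplacian (laplacian u)) x = -(|u x| ^ (p - 1) * u x))
    (Θ : Set (EuclideanSpace ℝ (Fin n))) (hΘ : IsCompact Θ)
    (hstab : ∀ φ : EuclideanSpace ℝ (Fin n) → ℝ, ContDiff ℝ (⊤ : ℕ∞) φ →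
      HasCompactSupport φ → tsupport φ ⊆ Θᶜ →
      p * (∫ x, |u x| ^ (p - 1) * φ x ^ 2) ≤ ∫ x, ‖gradient (laplacian φ) x‖ ^ 2) :
    u = 0 := by
  have hn6 : (0 : ℝ) < n - 6 := sub_pos.2 (by exact_mod_cast hn)
  exact triharmonic_finiteMorse_subcritical_general hp1 ((lt_div_iff₀ hn6).1 hp2) hu heq
    hΘ.isBounded hstab
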